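/- arXiv:2502.07198 — 4 statements merged into one kernel-verified Lean document; each statement's English description precedes it below -/
import Mathlib

section
/- The Hasse diagram of the cyclic Tamari lattice is an n-regular graph: for every 312-avoiding TITO x, the number of 312-avoiding TITOs covered by x plus the number of 312-avoiding TITOs covering x (covers taken in the poset of 312-avoiding TITOs under the Dyer order) equals n. -/
structure TITO (n : ℕ) where
  rel : ℤ → ℤ → Prop
  refl : ∀ a, rel a a
  antisymm : ∀ a b, rel a b → rel b a → a = b
  trans : ∀ a b c, rel a b → rel b c → rel a c
  total : ∀ a b, rel a b ∨ rel b a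
  invariant : ∀ a b, rel a b ↔ rel (a + n) (b + n)

namespace TITO

variable {n : ℕ}

/-- The inversion set of a TITO. -/
def Inversions (t : TITO n) : Set (ℤ × ℤ) := {p | p.1 < p.2 ∧ t.rel p.2 p.1}

/-- A TITO is 312-avoiding if there are no integers `a < b < c` with `c ≼ a` and `a ≼ b`. -/
def Avoids312 (t : TITO n) : Prop :=
  ¬ ∃ a b c : ℤ, a < b ∧ b < c ∧ t.rel c a ∧ t.rel a b

/-- A TITO is 132-avoiding if there are no integers `a < b < c` with `a ≼ c` and `c ≼ b`. -/
def Avoids132 (t : TITO n) : Prop :=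
  ¬ ∃ a b c : ℤ, a < b ∧ b < c ∧ t.rel a c ∧ t.rel c b

/-- A set is order-convex for a TITO. -/
def OrderConvex (t : TITO n) (S : Set ℤ) : Prop :=
  ∀ x ∈ S, ∀ z ∈ S, ∀ y : ℤ, t.rel x y → t.rel y z → y ∈ S

/-- A block of a TITO: an order-convex set with no minimal and no maximal element in which
all intervals are finite. -/
def IsBlock (t : TITO n) (I : Set ℤ) : Prop :=
  t.OrderConvex I ∧
  (∀ a ∈ I, ∃ b ∈ I, b ≠ a ∧ t.rel b a) ∧
  (∀ a ∈ I, ∃ b ∈ I, b ≠ a ∧ t.rel a b) ∧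
  (∀ a ∈ I, ∀ c ∈ I, t.rel a c → {b : ℤ | t.rel a b ∧ t.rel b c}.Finite)

/-- A block is waxing if `a ≼ a + n` for every `a` in it. -/
def Waxing (t : TITO n) (I : Set ℤ) : Prop := ∀ a ∈ I, t.rel a (a + n)

/-- A block is waning if `a + n ≼ a` for every `a` in it. -/
def Waning (t : TITO n) (I : Set ℤ) : Prop := ∀ a ∈ I, t.rel (a + n) a

/-- A TITO is real if `a ≼ a + n` whenever the residue class of `a` mod `n` is order-convex. -/
def IsReal (t : TITO n) : Prop :=
  ∀ a : ℤ, t.OrderConvex {x : ℤ | ∃ k : ℤ, x = a + k * n} → t.rel a (a + n)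

/-- A TITO is co-real if `a + n ≼ a` whenever the residue class of `a` mod `n` is order-convex. -/
def IsCoReal (t : TITO n) : Prop :=
  ∀ a : ℤ, t.OrderConvex {x : ℤ | ∃ k : ℤ, x = a + k * n} → t.rel (a + n) a

/-- `(a, b)` with `a < b` is a lower wall if `b ≼ a` is a cover relation of the total order. -/
def LowerWall (t : TITO n) (a b : ℤ) : Prop :=
  a < b ∧ t.rel b a ∧ ∀ z : ℤ, z ≠ a → z ≠ b → ¬ (t.rel b z ∧ t.rel z a)

end TITO

/-- `y` covers `x` within the subposet `P` of TITOs ordered by the Dyer order. -/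
def CoversIn {n : ℕ} (P : Set (TITO n)) (x y : TITO n) : Prop :=
  x ∈ P ∧ y ∈ P ∧ x.Inversions ⊂ y.Inversions ∧
    ¬ ∃ z ∈ P, x.Inversions ⊂ z.Inversions ∧ z.Inversions ⊂ y.Inversions

structure GoodL (N : ℤ) (L : ℤ → ℤ → Prop) : Prop where
  le : ∀ a b, L a b → a ≤ b
  refl : ∀ a, L a a
  conv : ∀ a b c, L a c → a ≤ b → b ≤ c → L a b
  trans : ∀ a b c, L a b → L b c → L a c
  inv : ∀ a b m, N ∣ m → L a b → L (a + m) (b + m)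

def QL (L : ℤ → ℤ → Prop) (p i : ℤ) : Prop := L p i ∧ ∀ c, i ≤ c → L p c → L i c

def PL (L : ℤ → ℤ → Prop) (i : ℤ) : Prop := ∃ p, p < i ∧ QL L p i

def PrevL (L : ℤ → ℤ → Prop) (i p : ℤ) : Prop :=
  p < i ∧ QL L p i ∧ ∀ q, p < q → q < i → ¬ QL L q i

def UpL (N : ℤ) (L : ℤ → ℤ → Prop) (i f a b : ℤ) : Prop :=
  L a b ∨ ∃ m, N ∣ m ∧ a = i + m ∧ a ≤ b ∧ (f = i + N ∨ L (f + m) b)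

def DownL (N : ℤ) (L : ℤ → ℤ → Prop) (i p a b : ℤ) : Prop :=
  L a b ∧ ¬ ∃ m, N ∣ m ∧ a = p + m ∧ i + m ≤ b

def NextF (L : ℤ → ℤ → Prop) (i f : ℤ) : Prop := i < f ∧ L i (f - 1) ∧ ¬ L i f

namespace GoodL

variable {N : ℤ} {L : ℤ → ℤ → Prop}

lemma inv' (h : GoodL N L) {a b m : ℤ} (hm : N ∣ m) (hl : L (a + m) (b + m)) : L a b := by
  have := h.inv _ _ (-m) ((dvd_neg).2 hm) hl
  simpa using this

lemma big (h : GoodL N L) (hN : 0 < N) {a : ℤ} (ha : L a (a + N)) : ∀ c, a ≤ c → L a c := by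
  have key : ∀ k : ℕ, L a (a + k * N) := by
    intro k
    induction k with
    | zero => simpa using h.refl a
    | succ k ih =>
      have h1 := h.inv _ _ (k * N) (Dvd.intro_left _ rfl) ha
      have h2 := h.trans _ _ _ ih h1
      have e : a + ((k + 1 : ℕ) : ℤ) * N = a + N + k * N := by push_cast; ring
      rw [e]; exact h2
  intro c hc
  refine h.conv _ _ _ (key (c - a).toNat) hc ?_
  have : ((c - a).toNat : ℤ) = c - a := Int.toNat_of_nonneg (by omega)
  rw [this]
  nlinarith

lemma QL_shift (h : GoodL N L) {p i m : ℤ} (hm : N ∣ m) (hq : QL L p i) :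
    QL L (p + m) (i + m) := by
  refine ⟨h.inv _ _ _ hm hq.1, fun c hc hl => ?_⟩
  have h1 : L p (c - m) := h.inv' hm (by simpa using hl)
  have := h.inv _ _ m hm (hq.2 (c - m) (by omega) h1)
  simpa using this

lemma QL_shift' (h : GoodL N L) {p i m : ℤ} (hm : N ∣ m) (hq : QL L (p + m) (i + m)) :
    QL L p i := by
  have := h.QL_shift ((dvd_neg).2 hm) hq
  simpa using this

lemma PL_shift (h : GoodL N L) {i m : ℤ} (hm : N ∣ m) (hq : PL L i) : PL L (i + m) := by
  obtain ⟨p, hp, hq⟩ := hq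
  exact ⟨p + m, by omega, h.QL_shift hm hq⟩

lemma PL_shift' (h : GoodL N L) {i m : ℤ} (hm : N ∣ m) (hq : PL L (i + m)) : PL L i := by
  have := h.PL_shift ((dvd_neg).2 hm) hq
  simpa using this

lemma PrevL_shift (h : GoodL N L) {i p m : ℤ} (hm : N ∣ m) (hq : PrevL L i p) :
    PrevL L (i + m) (p + m) := by
  obtain ⟨h1, h2, h3⟩ := hq
  refine ⟨by omega, h.QL_shift hm h2, fun q hq1 hq2 hq => ?_⟩
  refine h3 (q - m) (by omega) (by omega) (h.QL_shift' hm ?_)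
  simpa using hq

lemma exists_prev (_h : GoodL N L) {i : ℤ} (hi : PL L i) : ∃ p, PrevL L i p := by
  obtain ⟨p, hp⟩ := hi
  obtain ⟨q, hq, hq'⟩ := Int.exists_greatest_of_bdd (P := fun p => p < i ∧ QL L p i)
    ⟨i, fun z hz => hz.1.le⟩ ⟨p, hp⟩
  refine ⟨q, hq.1, hq.2, fun r hr hri hQ => ?_⟩
  have := hq' r ⟨hri, hQ⟩
  omega

lemma next_unique (h : GoodL N L) {i j p : ℤ} (hi : PrevL L i p) (hj : PrevL L j p) : i = j := by
  have key : ∀ i j, PrevL L i p → PrevL L j p → i < j → False := by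
    intro i j hi hj hij
    refine hj.2.2 i hi.1 hij ⟨hi.2.1.2 j hij.le hj.2.1.1, fun c hc hl => ?_⟩
    exact hj.2.1.2 c hc (h.trans _ _ _ hi.2.1.1 hl)
  rcases lt_trichotomy i j with hh | hh | hh
  · exact (key i j hi hj hh).elim
  · exact hh
  · exact (key j i hj hi hh).elim

lemma exists_nextF (h : GoodL N L) {i b : ℤ} (hb : i ≤ b) (hl : ¬ L i b) : ∃ f, NextF L i f := by
  obtain ⟨q, hq, hq'⟩ := Int.exists_greatest_of_bdd (P := fun c => L i c)
    ⟨b, fun z hz => by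
      by_contra hc
      exact hl (h.conv _ _ _ hz hb (by omega))⟩ ⟨i, h.refl i⟩
  have := hq' i (h.refl i)
  refine ⟨q + 1, by omega, by simpa using hq, fun hh => ?_⟩
  have := hq' _ hh
  omega

lemma exists_nextF_of_not_PL (h : GoodL N L) (hN : 0 < N) {i : ℤ} (hi : ¬ PL L i) :
    ∃ f, NextF L i f := by
  by_contra hc
  have hall : ∀ b, i ≤ b → L i b := by
    intro b hb
    by_contra hl
    exact hc (h.exists_nextF hb hl)
  refine hi ⟨i - N, by omega, ?_, fun c hc _ => hall c hc⟩
  have := h.inv _ _ (-N) (by simp) (hall (i + N) (by omega))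
  simpa [sub_eq_add_neg] using this

lemma nextF_le (h : GoodL N L) (hN : 0 < N) {i f : ℤ} (hf : NextF L i f) : f ≤ i + N := by
  by_contra hc
  obtain ⟨h1, h2, h3⟩ := hf
  exact h3 (h.big hN (h.conv _ _ _ h2 (by omega) (by omega)) f h1.le)

lemma not_PL_reach (h : GoodL N L) {i f a : ℤ} (hi : ¬ PL L i) (hf : NextF L i f)
    (ha : a < i) (hl : L a i) : L a f := by
  by_contra hc
  refine hi ⟨a, ha, hl, fun c hc' hlc => ?_⟩
  by_contra hn
  obtain ⟨h1, h2, h3⟩ := hf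
  have : f ≤ c := by
    by_contra hlt
    exact hn (h.conv _ _ _ h2 hc' (by omega))
  exact hc (h.conv _ _ _ hlc (by omega) this)

lemma up_good (h : GoodL N L) (hN : 0 < N) {i f : ℤ} (hi : ¬ PL L i) (hf : NextF L i f) :
    GoodL N (UpL N L i f) where
  le := by
    rintro a b (hl | ⟨m, hm, ha, hab, _⟩)
    · exact h.le _ _ hl
    · exact hab
  refl a := Or.inl (h.refl a)
  conv := by
    rintro a b c (hl | ⟨m, hm, ha, hac, hl⟩) hab hbc
    · exact Or.inl (h.conv _ _ _ hl hab hbc)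
    · rcases hl with hl | hl
      · exact Or.inr ⟨m, hm, ha, hab, Or.inl hl⟩
      · by_cases hb : f + m ≤ b
        · exact Or.inr ⟨m, hm, ha, hab, Or.inr (h.conv _ _ _ hl hb hbc)⟩
        · left
          subst ha
          exact h.conv _ _ _ (h.inv _ _ m hm hf.2.1) hab (by omega)
  inv := by
    rintro a b m hm (hl | ⟨k, hk, ha, hab, hl⟩)
    · exact Or.inl (h.inv _ _ _ hm hl)
    · refine Or.inr ⟨k + m, dvd_add hk hm, by omega, by omega, ?_⟩
      rcases hl with hl | hl
      · exact Or.inl hl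
      · right
        have := h.inv _ _ _ hm hl
        rwa [add_assoc] at this
  trans := by
    rintro a b c (hab | ⟨m, hm, ha, hab, hl⟩) (hbc | ⟨k, hk, hb, hbc, hl'⟩)
    · exact Or.inl (h.trans _ _ _ hab hbc)
    · have hle := h.le _ _ hab
      rcases hle.eq_or_lt with rfl | hlt
      · exact Or.inr ⟨k, hk, hb, hbc, hl'⟩
      · left
        have h1 : L (a - k) f := by
          apply h.not_PL_reach hi hf (by omega)
          apply h.inv' hk
          rw [hb] at hab
          simpa using hab
        have h2 : L a (f + k) := by
          have := h.inv _ _ _ hk h1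
          simpa using this
        rcases hl' with hl' | hl'
        · exact h.big hN (h.conv _ _ _ h2 (by omega) (by omega)) c (by omega)
        · exact h.trans _ _ _ h2 hl'
    · refine Or.inr ⟨m, hm, ha, hab.trans (h.le _ _ hbc), ?_⟩
      rcases hl with hl | hl
      · exact Or.inl hl
      · exact Or.inr (h.trans _ _ _ hl hbc)
    · refine Or.inr ⟨m, hm, ha, hab.trans hbc, ?_⟩
      rcases hl with hl | hl
      · exact Or.inl hl
      · by_cases hfN : f = i + N
        · exact Or.inl hfN
        right
        have hfle := h.nextF_le hN hf
        have hfb := h.le _ _ hl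
        have hdm : N ∣ k - m := dvd_sub hk hm
        have hpos : 0 < k - m := by have := hf.1; omega
        have hNle : N ≤ k - m := Int.le_of_dvd hpos hdm
        have h1 : L f (i + N) := by
          apply h.inv' hm
          exact h.conv _ _ _ hl (by omega) (by omega)
        have h2 : L (f - N) i := by
          apply h.inv' (m := N) dvd_rfl
          simpa using h1
        have h3 := h.not_PL_reach hi hf (by omega) h2
        have h4 : L (f + m) (f + m + N) := by
          have := h.inv _ _ (m + N) (dvd_add hm dvd_rfl) h3
          have e1 : f - N + (m + N) = f + m := by ring
          have e2 : f + (m + N) = f + m + N := by ring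
          rwa [e1, e2] at this
        exact h.big hN h4 c (by omega)

lemma down_good (h : GoodL N L) {i p : ℤ} (hp : PrevL L i p) :
    GoodL N (DownL N L i p) where
  le a b hl := h.le _ _ hl.1
  refl a := by
    refine ⟨h.refl a, ?_⟩
    rintro ⟨m, hm, ha, hi⟩
    have := hp.1
    omega
  conv := by
    rintro a b c ⟨hl, hn⟩ hab hbc
    refine ⟨h.conv _ _ _ hl hab hbc, ?_⟩
    rintro ⟨m, hm, ha, hi⟩
    exact hn ⟨m, hm, ha, hi.trans hbc⟩
  inv := by
    rintro a b m hm ⟨hl, hn⟩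
    refine ⟨h.inv _ _ _ hm hl, ?_⟩
    rintro ⟨k, hk, ha, hi⟩
    exact hn ⟨k - m, dvd_sub hk hm, by omega, by omega⟩
  trans := by
    rintro a b c ⟨hab, hn⟩ ⟨hbc, hn'⟩
    refine ⟨h.trans _ _ _ hab hbc, ?_⟩
    rintro ⟨m, hm, ha, hi⟩
    have hb : b < i + m := by
      by_contra hc
      exact hn ⟨m, hm, ha, by omega⟩
    have hle := h.le _ _ hab
    rcases hle.eq_or_lt with rfl | hlt
    · exact hn' ⟨m, hm, ha, hi⟩
    · subst ha
      obtain ⟨h1, h2, h3⟩ := h.PrevL_shift hm hp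
      refine h3 b hlt hb ⟨h.conv _ _ _ hbc hb.le hi, fun d hd hl => ?_⟩
      exact h2.2 d hd (h.trans _ _ _ hab hl)

variable {Z : ℤ → ℤ → Prop}

/-- Lemma A for upper covers. -/
lemma up_exists (h : GoodL N L) (hN : 0 < N) (hZ : GoodL N Z) (hLZ : ∀ a b, L a b → Z a b)
    {a b : ℤ} (hz : Z a b) (hl : ¬ L a b) : ∃ i, ¬ PL L i ∧ ∃ b, Z i b ∧ ¬ L i b := by
  have hab := hZ.le _ _ hz
  obtain ⟨i, hi, hmin⟩ := Int.exists_least_of_bdd (P := fun i => QL L i a)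
    ⟨a - N, fun z hq => by
      by_contra hc
      have h1 := h.le _ _ hq.1
      have h2 : L z (z + N) := h.conv _ _ _ hq.1 (by omega) (by omega)
      exact hl (hq.2 b hab (h.big hN h2 b (by omega)))⟩
    ⟨a, h.refl a, fun c _ hc => hc⟩
  refine ⟨i, ?_, b, hZ.trans _ _ _ (hLZ _ _ hi.1) hz, fun hc => hl (hi.2 b hab hc)⟩
  rintro ⟨p, hp, hq⟩
  have := hmin p ⟨h.trans _ _ _ hq.1 hi.1, fun c hc hl => hi.2 c hc
    (hq.2 c ((h.le _ _ hi.1).trans hc) hl)⟩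
  omega

lemma up_le (h : GoodL N L) (hN : 0 < N) (hZ : GoodL N Z) (hLZ : ∀ a b, L a b → Z a b)
    {i f b : ℤ} (hf : NextF L i f) (hz : Z i b) (hl : ¬ L i b) :
    ∀ c d, UpL N L i f c d → Z c d := by
  rintro c d (hcd | ⟨m, hm, hc, hcd, hd⟩)
  · exact hLZ _ _ hcd
  · subst hc
    have hib := hZ.le _ _ hz
    have hfb : f ≤ b := by
      by_contra hlt
      exact hl (h.conv _ _ _ hf.2.1 hib (by omega))
    have h1 : Z i f := hZ.conv _ _ _ hz hf.1.le hfb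
    have h2 := hZ.inv _ _ _ hm h1
    rcases hd with hd | hd
    · subst hd
      apply hZ.big hN _ _ hcd
      have e : i + N + m = i + m + N := by ring
      rwa [e] at h2
    · exact hZ.trans _ _ _ h2 (hLZ _ _ hd)

lemma down_exists (h : GoodL N L) (hN : 0 < N) (hZ : GoodL N Z) (hZL : ∀ a b, Z a b → L a b)
    {a b : ℤ} (hl : L a b) (hz : ¬ Z a b) : ∃ i p, PrevL L i p ∧ ¬ Z p i := by
  have hab := h.le _ _ hl
  obtain ⟨q, ⟨hq1, hq2⟩, hmax⟩ := Int.exists_greatest_of_bdd (P := fun q => Z a q ∧ QL L a q)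
    ⟨b, fun z hq => by
      by_contra hc
      exact hz (hZ.conv _ _ _ hq.1 hab (by omega))⟩
    ⟨a, hZ.refl a, h.refl a, fun c _ hc => hc⟩
  have hqb : q < b := by
    by_contra hc
    exact hz (hZ.conv _ _ _ hq1 hab (by omega))
  have hLqb : L q b := hq2.2 b hqb.le hl
  have hne : ∃ i, q < i ∧ QL L q i := by
    by_cases hall : ∀ c, q ≤ c → L q c
    · refine ⟨q + N, by omega, hall _ (by omega), fun c hc _ => ?_⟩
      have := h.inv _ _ N dvd_rfl (hall (c - N) (by omega))
      simpa using this
    · push Not at hall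
      obtain ⟨c, hc, hlc⟩ := hall
      obtain ⟨f, hf1, hf2, hf3⟩ := h.exists_nextF hc hlc
      have hbf : b < f := by
        by_contra hh
        exact hf3 (h.conv _ _ _ hLqb hf1.le (by omega))
      refine ⟨f - 1, by omega, hf2, fun d hd hld => ?_⟩
      have : d < f := by
        by_contra hh
        exact hf3 (h.conv _ _ _ hld hf1.le (by omega))
      have e : d = f - 1 := by omega
      rw [e]; exact h.refl _
  obtain ⟨i, ⟨hi1, hi2⟩, hmin⟩ := Int.exists_least_of_bdd (P := fun i => q < i ∧ QL L q i)
    ⟨q, fun z hz => hz.1.le⟩ hne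
  refine ⟨i, q, ⟨hi1, hi2, fun r hqr hri hQ => ?_⟩, fun hzq => ?_⟩
  · have := hmin r ⟨hqr, h.conv _ _ _ hi2.1 hqr.le hri.le, fun c hc hlc => ?_⟩
    · omega
    · by_cases hci : i ≤ c
      · exact h.trans _ _ _ hQ.1 (hi2.2 c hci hlc)
      · exact h.conv _ _ _ hQ.1 hc (by omega)
  · have := hmax i ⟨hZ.trans _ _ _ hq1 hzq, h.trans _ _ _ hq2.1 hi2.1, fun c hc hlc =>
      hi2.2 c hc (hq2.2 c (by omega) hlc)⟩
    omega

lemma down_le (hZ : GoodL N Z) (hZL : ∀ a b, Z a b → L a b)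
    {i p : ℤ} (hp : PrevL L i p) (hz : ¬ Z p i) : ∀ c d, Z c d → DownL N L i p c d := by
  intro c d hcd
  refine ⟨hZL _ _ hcd, ?_⟩
  rintro ⟨m, hm, rfl, hd⟩
  have := hp.1
  exact hz (hZ.inv' hm (hZ.conv _ _ _ hcd (by omega) hd))

end GoodL

namespace TITO

variable {n : ℕ}

def L (t : TITO n) (a b : ℤ) : Prop := a ≤ b ∧ t.rel b a

lemma rel_iff_not (t : TITO n) {a b : ℤ} (h : a < b) : t.rel a b ↔ ¬ t.L a b := by
  constructor
  · intro h1 h2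
    have := t.antisymm _ _ h1 h2.2
    omega
  · intro h1
    rcases t.total a b with h2 | h2
    · exact h2
    · exact (h1 ⟨h.le, h2⟩).elim

lemma ext_L {s t : TITO n} (h : ∀ a b, s.L a b ↔ t.L a b) : s = t := by
  have : s.rel = t.rel := by
    funext a b
    apply propext
    rcases lt_or_ge a b with hab | hab
    · rw [rel_iff_not s hab, rel_iff_not t hab, h]
    · have := h b a
      simpa [L, hab] using this
  cases s; cases t
  simp only at this
  subst this
  rfl

lemma inv_subset {s t : TITO n} :
    s.Inversions ⊆ t.Inversions ↔ ∀ a b, s.L a b → t.L a b := by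
  constructor
  · intro h a b hab
    rcases hab.1.eq_or_lt with rfl | hlt
    · exact ⟨le_rfl, t.refl _⟩
    · have : (a, b) ∈ t.Inversions := h (show (a, b) ∈ s.Inversions from ⟨hlt, hab.2⟩)
      exact ⟨hlt.le, this.2⟩
  · rintro h ⟨a, b⟩ ⟨h1, h2⟩
    exact ⟨h1, (h a b ⟨le_of_lt h1, h2⟩).2⟩

lemma rel_shift_nat (t : TITO n) (k : ℕ) (a b : ℤ) :
    t.rel a b ↔ t.rel (a + k * n) (b + k * n) := by
  induction k with
  | zero => simp
  | succ k ih =>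
    rw [ih, t.invariant]
    have e : ∀ c : ℤ, c + k * n + n = c + ((k + 1 : ℕ) : ℤ) * n := by intro c; push_cast; ring
    rw [e, e]

lemma rel_shift (t : TITO n) {m : ℤ} (hm : (n : ℤ) ∣ m) (a b : ℤ) (h : t.rel a b) :
    t.rel (a + m) (b + m) := by
  obtain ⟨k, rfl⟩ := hm
  rcases Int.eq_nat_or_neg k with ⟨j, rfl | rfl⟩
  · have := (t.rel_shift_nat j a b).1 h
    rwa [mul_comm (n : ℤ)]
  · rw [t.rel_shift_nat j]
    have e : ∀ c : ℤ, c + n * (-(j : ℤ)) + j * n = c := by intro c; ring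
    rwa [e, e]

lemma good_L (t : TITO n) (ht : t.Avoids312) : GoodL n t.L where
  le a b h := h.1
  refl a := ⟨le_rfl, t.refl a⟩
  conv := by
    rintro a b c ⟨hac, h⟩ hab hbc
    refine ⟨hab, ?_⟩
    rcases hab.eq_or_lt with rfl | hab'
    · exact t.refl _
    rcases hbc.eq_or_lt with rfl | hbc'
    · exact h
    rcases t.total b a with h1 | h1
    · exact h1
    · exact (ht ⟨a, b, c, hab', hbc', h, h1⟩).elim
  trans := by
    rintro a b c ⟨h1, h2⟩ ⟨h3, h4⟩
    exact ⟨h1.trans h3, t.trans _ _ _ h4 h2⟩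
  inv := by
    rintro a b m hm ⟨h1, h2⟩
    exact ⟨by omega, t.rel_shift hm _ _ h2⟩

lemma exists_of_good {M : ℤ → ℤ → Prop} (h : GoodL n M) :
    ∃ t : TITO n, t.Avoids312 ∧ ∀ a b, t.L a b ↔ M a b := by
  refine ⟨⟨fun b a => (a ≤ b ∧ M a b) ∨ (b < a ∧ ¬ M b a), ?_, ?_, ?_, ?_, ?_⟩, ?_, ?_⟩
  · intro a; exact Or.inl ⟨le_rfl, h.refl a⟩
  · rintro a b (⟨h1, h2⟩ | ⟨h1, h2⟩) (⟨h3, h4⟩ | ⟨h3, h4⟩)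
    · omega
    · exact (h4 h2).elim
    · exact (h2 h4).elim
    · omega
  · rintro a b c (⟨h1, h2⟩ | ⟨h1, h2⟩) (⟨h3, h4⟩ | ⟨h3, h4⟩)
    · exact Or.inl ⟨by omega, h.trans _ _ _ h4 h2⟩
    · rcases le_or_gt c a with hc | hc
      · left
        refine ⟨hc, ?_⟩
        by_contra hn
        exact h4 (h.conv _ _ _ h2 h3.le hc)
      · right
        exact ⟨hc, fun hn => h4 (h.trans _ _ _ h2 hn)⟩
    · rcases le_or_gt c a with hc | hc
      · left
        exact ⟨hc, h.conv _ _ _ h4 hc h1.le⟩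
      · right
        refine ⟨hc, fun hn => ?_⟩
        exact h2 (h.trans _ _ _ hn h4)
    · right
      exact ⟨by omega, fun hn => h2 (h.conv _ _ _ hn h1.le h3.le)⟩
  · intro a b
    rcases le_or_gt b a with hc | hc
    · by_cases hM : M b a
      · exact Or.inl (Or.inl ⟨hc, hM⟩)
      · right
        rcases hc.eq_or_lt with rfl | hc
        · exact (hM (h.refl _)).elim
        · exact Or.inr ⟨hc, hM⟩
    · by_cases hM : M a b
      · exact Or.inr (Or.inl ⟨hc.le, hM⟩)
      · exact Or.inl (Or.inr ⟨hc, hM⟩)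
  · intro a b
    have key : ∀ a b, M a b ↔ M (a + n) (b + n) := fun a b =>
      ⟨fun hh => h.inv _ _ _ dvd_rfl hh, fun hh => h.inv' dvd_rfl hh⟩
    rw [← key, ← key]
    simp
  · rintro ⟨a, b, c, hab, hbc, (⟨h1, h2⟩ | ⟨h1, h2⟩), (⟨h3, h4⟩ | ⟨h3, h4⟩)⟩
    · omega
    · exact h4 (h.conv _ _ _ h2 hab.le hbc.le)
    · omega
    · omega
  · intro a b
    constructor
    · rintro ⟨h1, (⟨h2, h3⟩ | ⟨h2, h3⟩)⟩
      · exact h3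
      · omega
    · intro hM
      exact ⟨h.le _ _ hM, Or.inl ⟨h.le _ _ hM, hM⟩⟩

lemma ssub_exists {s t : TITO n} (h : s.Inversions ⊂ t.Inversions) :
    (∀ a b, s.L a b → t.L a b) ∧ ∃ a b, t.L a b ∧ ¬ s.L a b := by
  refine ⟨inv_subset.1 h.1, ?_⟩
  have := h.2
  rw [inv_subset] at this
  push Not at this
  exact this

lemma ssub_of {s t : TITO n} (h : ∀ a b, s.L a b → t.L a b) {a b : ℤ} (h1 : t.L a b)
    (h2 : ¬ s.L a b) : s.Inversions ⊂ t.Inversions :=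
  ⟨inv_subset.2 h, fun hc => h2 (inv_subset.1 hc _ _ h1)⟩

end TITO

open TITO in
theorem up_count (n : ℕ) (hn : 2 ≤ n) (x : TITO n) (hx : x.Avoids312) :
    {y : TITO n | CoversIn {t : TITO n | t.Avoids312} x y}.ncard =
      {i : ℤ | (0 ≤ i ∧ i < n) ∧ ¬ PL x.L i}.ncard := by
  have hN : (0 : ℤ) < n := by omega
  have hg := x.good_L hx
  have ex : ∀ i : ℤ, ∃ y : TITO n, ¬ PL x.L i → y.Avoids312 ∧ ∃ f, NextF x.L i f ∧
      ∀ a b, y.L a b ↔ UpL n x.L i f a b := by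
    intro i
    by_cases hi : PL x.L i
    · exact ⟨x, fun h => (h hi).elim⟩
    · obtain ⟨f, hf⟩ := hg.exists_nextF_of_not_PL hN hi
      obtain ⟨y, hy, hy'⟩ := exists_of_good (hg.up_good hN hi hf)
      exact ⟨y, fun _ => ⟨hy, f, hf, hy'⟩⟩
  choose u hu using ex
  have hlt : ∀ i, ¬ PL x.L i → (∀ a b, x.L a b → (u i).L a b) ∧
      ∃ b, (u i).L i b ∧ ¬ x.L i b := by
    intro i hi
    obtain ⟨h1, f, hf, h2⟩ := hu i hi
    refine ⟨fun a b hab => (h2 a b).2 (Or.inl hab), f, ?_, hf.2.2⟩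
    rw [h2]
    refine Or.inr ⟨0, dvd_zero _, by simp, hf.1.le, Or.inr ?_⟩
    simpa using hg.refl f
  have hdiff : ∀ i, ¬ PL x.L i → ∀ a b, (u i).L a b → ¬ x.L a b → ∃ m, (n : ℤ) ∣ m ∧ a = i + m := by
    intro i hi a b hab hn
    obtain ⟨h1, f, hf, h2⟩ := hu i hi
    rw [h2] at hab
    rcases hab with h | ⟨m, hm, ha, _⟩
    · exact (hn h).elim
    · exact ⟨m, hm, ha⟩
  have hinj : Set.InjOn u {i : ℤ | (0 ≤ i ∧ i < n) ∧ ¬ PL x.L i} := by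
    rintro i ⟨⟨hi0, hin⟩, hi⟩ j ⟨⟨hj0, hjn⟩, hj⟩ hij
    obtain ⟨_, b, hb1, hb2⟩ := hlt i hi
    rw [hij] at hb1
    obtain ⟨m, hm, e⟩ := hdiff j hj i b hb1 hb2
    have : m = 0 := Int.eq_zero_of_abs_lt_dvd hm (by rw [abs_lt]; omega)
    omega
  rw [← Set.ncard_image_of_injOn hinj]
  congr 1
  ext y
  constructor
  · rintro ⟨_, hy, hlt', hcov⟩
    obtain ⟨hle, a, b, h1, h2⟩ := ssub_exists hlt'
    have hgy := y.good_L hy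
    obtain ⟨i, hi, b, hb1, hb2⟩ := hg.up_exists hN hgy hle h1 h2
    have hm : (n : ℤ) ∣ -(n * (i / n)) := (dvd_neg).2 (Dvd.intro _ rfl)
    have hmod : i % n = i + -(n * (i / n)) := by
      have := Int.emod_add_mul_ediv i n
      omega
    set m := -((n : ℤ) * (i / n))
    have hi' : ¬ PL x.L (i + m) := fun h => hi (hg.PL_shift' hm h)
    have hb1' := hgy.inv _ _ m hm hb1
    have hb2' : ¬ x.L (i + m) (b + m) := fun h => hb2 (hg.inv' hm h)
    refine ⟨i + m, ⟨⟨?_, ?_⟩, hi'⟩, ?_⟩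
    · rw [← hmod]; exact Int.emod_nonneg _ hN.ne'
    · rw [← hmod]; exact Int.emod_lt_of_pos _ hN
    · obtain ⟨g1, f, hf, g2⟩ := hu _ hi'
      have hle' : ∀ c d, (u (i + m)).L c d → y.L c d := fun c d hcd =>
        hg.up_le hN hgy hle hf hb1' hb2' c d ((g2 c d).1 hcd)
      apply ext_L
      intro c d
      refine ⟨hle' c d, fun hcd => ?_⟩
      by_contra hn'
      obtain ⟨k1, b', k2, k3⟩ := hlt _ hi'
      exact hcov ⟨u (i + m), g1, ssub_of k1 k2 k3, ssub_of hle' hcd hn'⟩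
  · rintro ⟨i, ⟨_, hi⟩, rfl⟩
    obtain ⟨g1, f, hf, g2⟩ := hu _ hi
    obtain ⟨k1, b', k2, k3⟩ := hlt _ hi
    refine ⟨hx, g1, ssub_of k1 k2 k3, ?_⟩
    rintro ⟨z, hz, hxz, hzu⟩
    obtain ⟨hle, a, b, h1, h2⟩ := ssub_exists hxz
    obtain ⟨hle2, c, d, h3, h4⟩ := ssub_exists hzu
    have hgz := z.good_L hz
    obtain ⟨j, hj, b, hb1, hb2⟩ := hg.up_exists hN hgz hle h1 h2
    obtain ⟨m, hm, rfl⟩ := hdiff i hi j b (hle2 _ _ hb1) hb2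
    have hb1' : z.L i (b - m) := hgz.inv' hm (by simpa using hb1)
    have hb2' : ¬ x.L i (b - m) := fun h => hb2 (by simpa using hg.inv _ _ m hm h)
    exact h4 (hg.up_le hN hgz hle hf hb1' hb2' c d ((g2 c d).1 h3))

open TITO in
theorem down_count (n : ℕ) (hn : 2 ≤ n) (x : TITO n) (hx : x.Avoids312) :
    {y : TITO n | CoversIn {t : TITO n | t.Avoids312} y x}.ncard =
      {i : ℤ | (0 ≤ i ∧ i < n) ∧ PL x.L i}.ncard := by
  have hN : (0 : ℤ) < n := by omega
  have hg := x.good_L hx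
  have ex : ∀ i : ℤ, ∃ y : TITO n, PL x.L i → y.Avoids312 ∧ ∃ p, PrevL x.L i p ∧
      ∀ a b, y.L a b ↔ DownL n x.L i p a b := by
    intro i
    by_cases hi : PL x.L i
    · obtain ⟨p, hp⟩ := hg.exists_prev hi
      obtain ⟨y, hy, hy'⟩ := exists_of_good (hg.down_good hp)
      exact ⟨y, fun _ => ⟨hy, p, hp, hy'⟩⟩
    · exact ⟨x, fun h => (hi h).elim⟩
  choose u hu using ex
  have hlt : ∀ i, PL x.L i → (∀ a b, (u i).L a b → x.L a b) ∧
      ∃ p, PrevL x.L i p ∧ ¬ (u i).L p i := by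
    intro i hi
    obtain ⟨h1, p, hp, h2⟩ := hu i hi
    refine ⟨fun a b hab => ((h2 a b).1 hab).1, p, hp, ?_⟩
    rw [h2]
    rintro ⟨_, hh⟩
    exact hh ⟨0, dvd_zero _, by simp, by simp⟩
  have hdiff : ∀ i, PL x.L i → ∀ j p, PrevL x.L j p → ¬ (u i).L p j →
      ∃ m, (n : ℤ) ∣ m ∧ j = i + m := by
    intro i hi j p hp hnl
    obtain ⟨h1, q, hq, h2⟩ := hu i hi
    rw [h2] at hnl
    have : ∃ m, (n : ℤ) ∣ m ∧ p = q + m ∧ i + m ≤ j := by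
      by_contra hc
      exact hnl ⟨hp.2.1.1, hc⟩
    obtain ⟨m, hm, rfl, _⟩ := this
    exact ⟨m, hm, hg.next_unique hp (hg.PrevL_shift hm hq)⟩
  have hinj : Set.InjOn u {i : ℤ | (0 ≤ i ∧ i < n) ∧ PL x.L i} := by
    rintro i ⟨⟨hi0, hin⟩, hi⟩ j ⟨⟨hj0, hjn⟩, hj⟩ hij
    obtain ⟨_, p, hp1, hp2⟩ := hlt i hi
    rw [hij] at hp2
    obtain ⟨m, hm, e⟩ := hdiff j hj i p hp1 hp2
    have : m = 0 := Int.eq_zero_of_abs_lt_dvd hm (by rw [abs_lt]; omega)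
    omega
  rw [← Set.ncard_image_of_injOn hinj]
  congr 1
  ext y
  constructor
  · rintro ⟨hy, _, hlt', hcov⟩
    obtain ⟨hle, a, b, h1, h2⟩ := ssub_exists hlt'
    have hgy := y.good_L hy
    obtain ⟨i, p, hp, hnp⟩ := hg.down_exists hN hgy hle h1 h2
    have hm : (n : ℤ) ∣ -(n * (i / n)) := (dvd_neg).2 (Dvd.intro _ rfl)
    have hmod : i % n = i + -(n * (i / n)) := by
      have := Int.emod_add_mul_ediv i n
      omega
    set m := -((n : ℤ) * (i / n))
    have hp' := hg.PrevL_shift hm hp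
    have hi' : PL x.L (i + m) := ⟨_, hp'.1, hp'.2.1⟩
    have hnp' : ¬ y.L (p + m) (i + m) := fun h => hnp (hgy.inv' hm h)
    refine ⟨i + m, ⟨⟨?_, ?_⟩, hi'⟩, ?_⟩
    · rw [← hmod]; exact Int.emod_nonneg _ hN.ne'
    · rw [← hmod]; exact Int.emod_lt_of_pos _ hN
    · obtain ⟨g1, q, hq, g2⟩ := hu _ hi'
      have hqp : q = p + m := by
        rcases lt_trichotomy q (p + m) with h | h | h
        · exact (hq.2.2 _ h hp'.1 hp'.2.1).elim
        · exact h
        · exact (hp'.2.2 _ h hq.1 hq.2.1).elim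
      subst hqp
      have hle' : ∀ c d, y.L c d → (u (i + m)).L c d := fun c d hcd =>
        (g2 c d).2 (hgy.down_le hle hq hnp' c d hcd)
      apply ext_L
      intro c d
      refine ⟨fun hcd => ?_, hle' c d⟩
      by_contra hn'
      obtain ⟨k1, b', k2, k3⟩ := hlt _ hi'
      exact hcov ⟨u (i + m), g1, ssub_of hle' hcd hn', ssub_of k1 k2.2.1.1 k3⟩
  · rintro ⟨i, ⟨_, hi⟩, rfl⟩
    obtain ⟨g1, q, hq, g2⟩ := hu _ hi
    obtain ⟨k1, b', k2, k3⟩ := hlt _ hi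
    refine ⟨g1, hx, ssub_of k1 k2.2.1.1 k3, ?_⟩
    rintro ⟨z, hz, huz, hzx⟩
    obtain ⟨hle, a, b, h1, h2⟩ := ssub_exists hzx
    obtain ⟨hle2, c, d, h3, h4⟩ := ssub_exists huz
    have hgz := z.good_L hz
    obtain ⟨j, p, hp, hnp⟩ := hg.down_exists hN hgz hle h1 h2
    obtain ⟨m, hm, rfl⟩ := hdiff i hi j p hp (fun h => hnp (hle2 _ _ h))
    have hq' := hg.PrevL_shift hm hq
    have hqp : q + m = p := by
      rcases lt_trichotomy (q + m) p with h | h | h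
      · exact (hq'.2.2 _ h hp.1 hp.2.1).elim
      · exact h
      · exact (hp.2.2 _ h hq'.1 hq'.2.1).elim
    subst hqp
    have hnq : ¬ z.L q i := fun h => hnp (hgz.inv _ _ m hm h)
    exact h4 ((g2 c d).2 (hgz.down_le hle hq hnq c d h3))

theorem stmt10 (n : ℕ) (hn : 2 ≤ n) (x : TITO n) (hx : x.Avoids312) :
    {y : TITO n | CoversIn {t : TITO n | t.Avoids312} y x}.ncard +
      {y : TITO n | CoversIn {t : TITO n | t.Avoids312} x y}.ncard = n := by
  rw [up_count n hn x hx, down_count n hn x hx]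
  have hfin : (Set.Ico (0 : ℤ) n).Finite := Set.finite_Ico _ _
  have h1 : {i : ℤ | (0 ≤ i ∧ i < n) ∧ PL x.L i}.Finite := hfin.subset fun i hi => hi.1
  have h2 : {i : ℤ | (0 ≤ i ∧ i < n) ∧ ¬ PL x.L i}.Finite := hfin.subset fun i hi => hi.1
  rw [← Set.ncard_union_eq ?_ h1 h2]
  · have : {i : ℤ | (0 ≤ i ∧ i < n) ∧ PL x.L i} ∪ {i : ℤ | (0 ≤ i ∧ i < n) ∧ ¬ PL x.L i} =
        ((Finset.Ico (0 : ℤ) n : Finset ℤ) : Set ℤ) := by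
      ext i
      simp only [Set.mem_union, Set.mem_setOf_eq, Finset.coe_Ico, Set.mem_Ico]
      tauto
    rw [this, Set.ncard_coe_finset]
    simp
  · rw [Set.disjoint_left]
    rintro i ⟨_, hi⟩ ⟨_, hi'⟩
    exact hi' hi
end

section
/- The Hasse diagram of the affine Tamari lattice is an n-regular graph: for every 312-avoiding real TITO x, the number of 312-avoiding real TITOs covered by x plus the number of 312-avoiding real TITOs covering x (covers taken in the poset of 312-avoiding real TITOs under the Dyer order) equals n. -/
structure BV (N : ℤ) (g : ℤ → ℤ) : Prop where
  lo : ∀ a, a ≤ g a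
  hi : ∀ a, g a ≤ a + N
  per1 : ∀ a, g (a + N) = g a + N
  nest : ∀ a b, g a < a + N → a ≤ b → b ≤ g a → g b ≤ g a

def RealV (N : ℤ) (g : ℤ → ℤ) : Prop :=
  ∀ a, g a = a + N → ∃ b, ¬ N ∣ b - a ∧ g b = b + N

lemma BV.perk {N : ℤ} {g : ℤ → ℤ} (h : BV N g) (a k : ℤ) : g (a + N * k) = g a + N * k := by
  induction k using Int.induction_on with
  | zero => simp
  | succ i ih =>
    have := h.per1 (a + N * i)
    rw [show a + N * ((i : ℤ) + 1) = a + N * i + N by ring, this, ih]; ring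
  | pred i ih =>
    have := h.per1 (a + N * (-(i : ℤ) - 1))
    rw [show a + N * (-(i : ℤ) - 1) + N = a + N * (-(i : ℤ)) by ring, ih] at this
    linarith

lemma BV.per {N : ℤ} {g : ℤ → ℤ} (h : BV N g) {e a : ℤ} (hd : N ∣ e - a) :
    g e = g a + (e - a) := by
  obtain ⟨k, hk⟩ := hd
  have := h.perk a k
  rw [show e = a + N * k by linarith, this]; ring

lemma dvd_small {N d : ℤ} (hd : N ∣ d) (h1 : -N < d) (h2 : d < N) : d = 0 := by
  apply Int.eq_zero_of_abs_lt_dvd hd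
  rw [abs_lt]; exact ⟨h1, h2⟩

def upd (N : ℤ) (g : ℤ → ℤ) (a v : ℤ) : ℤ → ℤ := fun e => if N ∣ e - a then v + (e - a) else g e

lemma upd_self (N : ℤ) (g : ℤ → ℤ) (a v : ℤ) : upd N g a v a = v := by simp [upd]
lemma upd_pos {N : ℤ} (g : ℤ → ℤ) {a e : ℤ} (v : ℤ) (h : N ∣ e - a) :
    upd N g a v e = v + (e - a) := by simp [upd, h]
lemma upd_neg {N : ℤ} (g : ℤ → ℤ) {a e : ℤ} (v : ℤ) (h : ¬ N ∣ e - a) :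
    upd N g a v e = g e := by simp [upd, h]

lemma upd_BV {N : ℤ} {g : ℤ → ℤ} (hg : BV N g) (a v : ℤ) (h0 : a ≤ v) (h1 : v ≤ a + N)
    (h3 : v < a + N → ∀ b, a < b → b ≤ v → g b ≤ v)
    (h4 : ∀ e, g e < e + N → ¬ N ∣ e - a → e ≤ a → a ≤ g e → v ≤ g e) :
    BV N (upd N g a v) := by
  refine ⟨?_, ?_, ?_, ?_⟩
  · intro e
    by_cases h : N ∣ e - a
    · rw [upd_pos _ _ h]; omega
    · rw [upd_neg _ _ h]; exact hg.lo e
  · intro e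
    by_cases h : N ∣ e - a
    · rw [upd_pos _ _ h]; omega
    · rw [upd_neg _ _ h]; exact hg.hi e
  · intro e
    by_cases h : N ∣ e - a
    · have h' : N ∣ e + N - a := by
        rw [show e + N - a = (e - a) + N by ring]; exact dvd_add h (dvd_refl N)
      rw [upd_pos _ _ h, upd_pos _ _ h']; ring
    · have h' : ¬ N ∣ e + N - a := by
        intro h'; apply h
        rw [show e - a = (e + N - a) - N by ring]; exact dvd_sub h' (dvd_refl N)
      rw [upd_neg _ _ h, upd_neg _ _ h']; exact hg.per1 e
  · intro e b hlt heb hbe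
    by_cases h : N ∣ e - a
    · rw [upd_pos _ _ h] at hlt hbe ⊢
      by_cases hb : N ∣ b - a
      · rw [upd_pos _ _ hb]
        have : b - e = 0 := by
          apply dvd_small (N := N)
          · rw [show b - e = (b - a) - (e - a) by ring]; exact dvd_sub hb h
          · omega
          · omega
        omega
      · rw [upd_neg _ _ hb]
        have h5 := h3 (by omega) (b - (e - a)) (by
          rcases lt_or_eq_of_le (show a ≤ b - (e - a) by omega) with h6 | h6
          · exact h6
          · exfalso; apply hb; rw [show b - a = e - a by omega]; exact h) (by omega)
        have h6 := hg.per (e := b) (a := b - (e - a)) (by rwa [show b - (b - (e - a)) = e - a by ring])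
        omega
    · rw [upd_neg _ _ h] at hlt hbe ⊢
      by_cases hb : N ∣ b - a
      · rw [upd_pos _ _ hb]
        have h6 := hg.per (e := e) (a := e - (b - a)) (by rwa [show e - (e - (b - a)) = b - a by ring])
        have h5 := h4 (e - (b - a)) (by omega) (by
          intro h7; apply h
          rw [show e - a = (e - (b - a) - a) + (b - a) by ring]; exact dvd_add h7 hb)
          (by omega) (by omega)
        omega
      · rw [upd_neg _ _ hb]
        exact hg.nest e b hlt heb hbe

open Classical in
noncomputable def proj (N : ℤ) (h : ℤ → ℤ) : ℤ → ℤ := fun b =>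
  if h b = b + N ∧ ∀ c, h c = c + N → N ∣ c - b then b + N - 1 else h b

lemma proj_pos {N : ℤ} {h : ℤ → ℤ} {b : ℤ} (hb : h b = b + N ∧ ∀ c, h c = c + N → N ∣ c - b) :
    proj N h b = b + N - 1 := by simp only [proj]; rw [if_pos hb]
lemma proj_neg {N : ℤ} {h : ℤ → ℤ} {b : ℤ} (hb : ¬ (h b = b + N ∧ ∀ c, h c = c + N → N ∣ c - b)) :
    proj N h b = h b := by simp only [proj]; rw [if_neg hb]

lemma proj_cond {N : ℤ} {h : ℤ → ℤ} (hh : BV N h) {b e : ℤ} (hd : N ∣ e - b)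
    (hb : h b = b + N ∧ ∀ c, h c = c + N → N ∣ c - b) :
    h e = e + N ∧ ∀ c, h c = c + N → N ∣ c - e := by
  have := hh.per hd
  refine ⟨by omega, fun c hc => ?_⟩
  rw [show c - e = (c - b) - (e - b) by ring]; exact dvd_sub (hb.2 c hc) hd

lemma proj_le {N : ℤ} (h : ℤ → ℤ) (b : ℤ) : proj N h b ≤ h b := by
  by_cases hb : h b = b + N ∧ ∀ c, h c = c + N → N ∣ c - b
  · rw [proj_pos hb]; omega
  · rw [proj_neg hb]

lemma proj_BV {N : ℤ} (hN : 0 < N) {h : ℤ → ℤ} (hh : BV N h) : BV N (proj N h) := by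
  refine ⟨?_, ?_, ?_, ?_⟩
  · intro e
    by_cases hb : h e = e + N ∧ ∀ c, h c = c + N → N ∣ c - e
    · rw [proj_pos hb]; omega
    · rw [proj_neg hb]; exact hh.lo e
  · intro e; exact (proj_le h e).trans (hh.hi e)
  · intro e
    by_cases hb : h e = e + N ∧ ∀ c, h c = c + N → N ∣ c - e
    · rw [proj_pos hb, proj_pos (proj_cond hh (by simp) hb)]; ring
    · rw [proj_neg hb, proj_neg, hh.per1]
      intro hb'; exact hb (proj_cond hh (by simp) hb')
  · intro a b hlt hab hba
    by_cases hb : h a = a + N ∧ ∀ c, h c = c + N → N ∣ c - a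
    · rw [proj_pos hb] at hlt hba ⊢
      rcases eq_or_lt_of_le hab with rfl | hab
      · rw [proj_pos hb]
      · have h1 : h b ≠ b + N := by
          intro h1
          have := dvd_small (hb.2 b h1) (by omega) (by omega)
          omega
        rw [proj_neg (fun h => h1 h.1)]
        by_contra h2
        have h3 := hh.hi b
        have h4 := hh.nest b (a + N) (by omega) (by omega) (by omega)
        have h5 := hh.per1 a
        omega
    · rw [proj_neg hb] at hlt hba ⊢
      exact (proj_le h b).trans (hh.nest a b hlt hab hba)

lemma proj_real {N : ℤ} {h : ℤ → ℤ} : RealV N (proj N h) := by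
  intro a ha
  by_cases hb : h a = a + N ∧ ∀ c, h c = c + N → N ∣ c - a
  · rw [proj_pos hb] at ha; omega
  · rw [proj_neg hb] at ha
    have : ∃ c, h c = c + N ∧ ¬ N ∣ c - a := by
      by_contra h'; push Not at h'; exact hb ⟨ha, h'⟩
    obtain ⟨c, hc, hca⟩ := this
    refine ⟨c, hca, ?_⟩
    rw [proj_neg, hc]
    rintro ⟨_, h2⟩
    apply hca
    have := h2 a ha
    rw [show c - a = -(a - c) by ring]; exact (dvd_neg).2 this

lemma le_proj {N : ℤ} {h y : ℤ → ℤ} (hy : BV N y) (hyr : RealV N y) (hle : ∀ a, y a ≤ h a)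
    (hh : BV N h) (a : ℤ) : y a ≤ proj N h a := by
  by_cases hb : h a = a + N ∧ ∀ c, h c = c + N → N ∣ c - a
  · rw [proj_pos hb]
    by_contra h1
    have := hy.hi a
    obtain ⟨b, h2, h3⟩ := hyr a (by omega)
    apply h2; apply hb.2
    have := hle b
    have := hh.hi b
    omega
  · rw [proj_neg hb]; exact hle a

lemma lower_one {N : ℤ} (hN : 0 < N) {g : ℤ → ℤ} (hg : BV N g) (hr : RealV N g) (a : ℤ) (ha : g a ≠ a) :
    ∃ l : ℤ → ℤ, BV N l ∧ RealV N l ∧ (∀ e, l e ≤ g e) ∧ l a < g a ∧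
      (∀ b, ¬ N ∣ b - a → l b = g b ∨ (g b = b + N ∧ g a = a + N ∧ l b = b + N - 1)) ∧
      (∀ b, a < b → b ≤ l a → g b ≤ l a) ∧
      (∀ y, BV N y → RealV N y → (∀ e, y e ≤ g e) → y a < g a →
        (∀ b, a < b → b ≤ y a → g b ≤ y a) → ∀ e, y e ≤ l e) := by
  have hlo := hg.lo a
  have hhi := hg.hi a
  obtain ⟨v, ⟨hv1, hv2, hv3⟩, hvm⟩ := Int.exists_greatest_of_bdd
    (P := fun v => a ≤ v ∧ v < g a ∧ ∀ b, a < b → b ≤ v → g b ≤ v)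
    ⟨g a, fun z hz => hz.2.1.le⟩ ⟨a, le_refl a, by omega, fun b h1 h2 => by omega⟩
  have hB : BV N (upd N g a v) := by
    apply upd_BV hg a v hv1 (by omega) (fun _ => hv3)
    intro e h1 h2 h3 h4
    have := hg.nest e a h1 h3 h4
    omega
  have hle : ∀ e, upd N g a v e ≤ g e := by
    intro e
    by_cases h : N ∣ e - a
    · rw [upd_pos _ _ h, hg.per h]; omega
    · rw [upd_neg _ _ h]
  have hpa : proj N (upd N g a v) a = v := by
    rw [proj_neg, upd_self]
    rw [upd_self]; intro h; omega
  refine ⟨proj N (upd N g a v), proj_BV hN hB, proj_real, fun e => (proj_le _ e).trans (hle e), ?_, ?_, ?_, ?_⟩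
  · rw [hpa]; exact hv2
  · intro b hb
    by_cases hc : upd N g a v b = b + N ∧ ∀ c, upd N g a v c = c + N → N ∣ c - b
    · right
      rw [proj_pos hc]
      obtain ⟨h1, h2⟩ := hc
      rw [upd_neg _ _ hb] at h1
      refine ⟨h1, ?_, rfl⟩
      obtain ⟨c, hc1, hc2⟩ := hr b h1
      by_cases hca : N ∣ c - a
      · have := hg.per hca; omega
      · exact absurd (h2 c (by rw [upd_neg _ _ hca]; exact hc2)) hc1
    · left; rw [proj_neg hc, upd_neg _ _ hb]
  · rw [hpa]; exact hv3
  · intro y hy hyr hyg hya hyb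
    apply le_proj hy hyr _ hB
    intro e
    by_cases h : N ∣ e - a
    · rw [upd_pos _ _ h, hy.per h]
      have := hvm (y a) ⟨hy.lo a, hya, hyb⟩
      omega
    · rw [upd_neg _ _ h]; exact hyg e

lemma lower_exists {N : ℤ} (hN : 0 < N) {g y : ℤ → ℤ} (hg : BV N g) (hy : BV N y)
    (hle : ∀ e, y e ≤ g e) (hne : ∃ e, y e < g e) :
    ∃ a, 0 ≤ a ∧ a < N ∧ y a < g a ∧ (∀ b, a < b → b ≤ y a → g b ≤ y a) := by
  obtain ⟨m, ⟨e, he1, he2⟩, hm⟩ := Int.exists_least_of_bdd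
    (P := fun m => ∃ e, y e < g e ∧ y e - e = m)
    ⟨0, by rintro z ⟨e, _, rfl⟩; have := hy.lo e; omega⟩
    (by obtain ⟨e, he⟩ := hne; exact ⟨_, e, he, rfl⟩)
  have key : ∀ b, e < b → b ≤ y e → g b ≤ y e := by
    intro b h1 h2
    have h3 := hg.hi e
    have h4 := hy.nest e b (by omega) h1.le h2
    by_contra h5
    have := hm _ ⟨b, by omega, rfl⟩
    omega
  have hd : N ∣ e % N - e := by
    rw [show e % N - e = -(e - e % N) by ring]
    exact (dvd_neg).2 (Int.dvd_self_sub_emod)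
  have p1 := hy.per hd
  have p2 := hg.per hd
  refine ⟨e % N, Int.emod_nonneg _ hN.ne', Int.emod_lt_of_pos _ hN, by omega, ?_⟩
  intro b h1 h2
  have p3 := hg.per (e := b) (a := b - (e % N - e)) (by rwa [show b - (b - (e % N - e)) = e % N - e by ring])
  have := key (b - (e % N - e)) (by omega) (by omega)
  omega

lemma lower_anti {N : ℤ} (hN : 0 < N) {g l l' : ℤ → ℤ} (hg : BV N g) {a a' : ℤ}
    (hd : ¬ N ∣ a' - a)
    (h1 : ∀ b, ¬ N ∣ b - a → l b = g b ∨ (g b = b + N ∧ g a = a + N ∧ l b = b + N - 1))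
    (h2 : l' a' < g a') (h3 : ∀ b, a' < b → b ≤ l' a' → g b ≤ l' a') (hle : ∀ e, l e ≤ l' e) : False := by
  have := hle a'
  rcases h1 a' hd with h | ⟨h4, h5, h6⟩
  · omega
  · have q1 := Int.emod_nonneg (a - a') hN.ne'
    have q2 := Int.emod_lt_of_pos (a - a') hN
    have q3 : (a - a') % N ≠ 0 := by
      intro h; apply hd
      have := Int.dvd_of_emod_eq_zero h
      rw [show a' - a = -(a - a') by ring]; exact (dvd_neg).2 this
    have q4 : N ∣ (a' + (a - a') % N) - a := by
      rw [show (a' + (a - a') % N) - a = -((a - a') - (a - a') % N) by ring]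
      exact (dvd_neg).2 (Int.dvd_self_sub_emod)
    have q5 := hg.per q4
    have := h3 (a' + (a - a') % N) (by omega) (by omega)
    omega

lemma upper_one {N : ℤ} (hN : 2 ≤ N) {g : ℤ → ℤ} (hg : BV N g) (hr : RealV N g) (v : ℤ) (hv : g v = v) :
    ∃ u : ℤ → ℤ, BV N u ∧ RealV N u ∧ (∀ e, g e ≤ u e) ∧ (∃ e, N ∣ g e - v ∧ g e < u e) ∧
      (∀ e, ¬ N ∣ g e - v → u e = g e) ∧
      (∀ y, BV N y → RealV N y → (∀ e, g e ≤ y e) → (∃ a, g a = v ∧ g a < y a) →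
        (g (v - N + 1) ≠ v ∨ ∀ c, g c < y c → N ∣ g c - v) → ∀ e, u e ≤ y e) := by
  by_cases hp : g (v - N + 1) = v
  · -- problematic case
    obtain ⟨a, rfl⟩ : ∃ a, v = a + N - 1 := ⟨v - N + 1, by ring⟩
    rw [show a + N - 1 - N + 1 = a by ring] at *
    have fin0 : ∀ b, a ≤ b → b < a + N → g b ≤ a + N - 1 := by
      intro b h1 h2
      have := hg.nest a b (by omega) h1 (by omega)
      omega
    have rep : ∀ b, ∃ c, N ∣ b - c ∧ a ≤ c ∧ c < a + N := by
      intro b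
      refine ⟨a + (b - a) % N, ?_, ?_, ?_⟩
      · rw [show b - (a + (b - a) % N) = (b - a) - (b - a) % N by ring]
        exact Int.dvd_self_sub_emod
      · have := Int.emod_nonneg (b - a) (show N ≠ 0 by omega); omega
      · have := Int.emod_lt_of_pos (b - a) (show 0 < N by omega); omega
    have fin : ∀ b, g b < b + N := by
      intro b
      obtain ⟨c, h1, h2, h3⟩ := rep b
      have := hg.per h1
      have := fin0 c h2 h3
      omega
    obtain ⟨b0, ⟨hb1, hb2⟩, hbm⟩ := Int.exists_least_of_bdd
      (P := fun b => a < b ∧ g b = a + N - 1)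
      ⟨a, fun z hz => hz.1.le⟩ ⟨a + N - 1, by omega, hv⟩
    have hb3 := hg.lo b0
    have hnd : ¬ N ∣ b0 - a := by
      intro h; have := dvd_small h (by omega) (by omega); omega
    have hB1 : BV N (upd N g a (a + N)) := by
      apply upd_BV hg a (a + N) (by omega) (by omega) (by intro h; omega)
      intro e h1 h2 h3 h4
      exfalso
      have h5 := hg.nest e a h1 h3 h4
      have : e ≠ a := by rintro rfl; simp at h2
      omega
    have hB : BV N (upd N (upd N g a (a + N)) b0 (b0 + N)) := by
      apply upd_BV hB1 b0 (b0 + N) (by omega) (by omega) (by intro h; omega)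
      intro e h1 h2 h3 h4
      exfalso
      by_cases he : N ∣ e - a
      · rw [upd_pos _ _ he] at h1; omega
      · rw [upd_neg _ _ he] at h1 h4
        have h5 := hg.nest e b0 h1 h3 h4
        have n1 : e ≠ a := by rintro rfl; simp at he
        have n2 : e ≠ b0 := by rintro rfl; simp at h2
        by_cases h6 : e < a
        · omega
        · have h7 := fin0 e (by omega) (by omega)
          have := hbm e ⟨by omega, by omega⟩
          omega
    have hle : ∀ e, g e ≤ upd N (upd N g a (a + N)) b0 (b0 + N) e := by
      intro e
      have := hg.hi e
      by_cases h : N ∣ e - b0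
      · rw [upd_pos _ _ h]; omega
      · rw [upd_neg _ _ h]
        by_cases h' : N ∣ e - a
        · rw [upd_pos _ _ h']; omega
        · rw [upd_neg _ _ h']
    have hnd' : ¬ N ∣ a - b0 := by
      rw [show a - b0 = -(b0 - a) by ring, dvd_neg]; exact hnd
    refine ⟨_, hB, ?_, hle, ⟨a, ?_, ?_⟩, ?_, ?_⟩
    · intro c hc
      by_cases h : N ∣ b0 - c
      · refine ⟨a, ?_, ?_⟩
        · intro h'; apply hnd
          rw [show b0 - a = (b0 - c) - (a - c) by ring]; exact dvd_sub h h'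
        · rw [upd_neg _ _ hnd', upd_self]
      · exact ⟨b0, h, by rw [upd_self]⟩
    · rw [hp]; simp
    · rw [upd_neg _ _ hnd', upd_self]; omega
    · intro e he
      have n1 : ¬ N ∣ e - b0 := by
        intro h; apply he
        rw [hg.per h, hb2, show a + N - 1 + (e - b0) - (a + N - 1) = e - b0 by ring]; exact h
      have n2 : ¬ N ∣ e - a := by
        intro h; apply he
        rw [hg.per h, hp, show a + N - 1 + (e - a) - (a + N - 1) = e - a by ring]; exact h
      rw [upd_neg _ _ n1, upd_neg _ _ n2]
    · rintro y hy hyr hyg ⟨c, hc1, hc2⟩ hor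
      have hor' : ∀ c, g c < y c → N ∣ g c - (a + N - 1) := by
        rcases hor with h | h
        · exact absurd hp h
        · exact h
      have f1 := fin c
      have f2 := hg.lo c
      have ya : y a = a + N := by
        by_contra h
        have k1 := hy.hi a
        have k2 := hyg a
        have k3 := hy.nest a c (by omega) (by omega) (by omega)
        omega
      obtain ⟨b', h1, h2⟩ := hyr a ya
      obtain ⟨b, h3, h4, h5⟩ := rep b'
      have h6 := hy.per h3
      have h7 := fin b
      have h8 := fin0 b h4 h5
      have h9 := hg.lo b
      have hba : b ≠ a := by rintro rfl; exact h1 h3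
      have h10 := dvd_small (hor' b (by omega)) (by omega) (by omega)
      have h11 := hbm b ⟨by omega, by omega⟩
      have yb : y b0 = b0 + N := by
        by_contra h
        have k1 := hy.hi b0
        have k2 := hyg b0
        have k3 := hy.nest b0 b (by omega) (by omega) (by omega)
        omega
      intro e
      by_cases h : N ∣ e - b0
      · rw [upd_pos _ _ h, hy.per h]; omega
      · rw [upd_neg _ _ h]
        by_cases h' : N ∣ e - a
        · rw [upd_pos _ _ h', hy.per h']; omega
        · rw [upd_neg _ _ h']; exact hyg e
  · have hvN : g (v - N) = v - N := by
      have := hg.per (e := v - N) (a := v) (by simp)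
      omega
    obtain ⟨a, ha, ham⟩ := Int.exists_least_of_bdd
      (P := fun e => g e = v)
      ⟨v - N, fun z hz => by have := hg.hi z; omega⟩ ⟨v, hv⟩
    have h1 := hg.hi a
    have h2 := hg.lo a
    have h3 : a ≠ v - N + 1 := by rintro rfl; exact hp ha
    have h4 : a ≠ v - N := by rintro rfl; omega
    have h5 := hg.lo (v + 1)
    have h6 := hg.hi (v + 1)
    obtain ⟨w, hw⟩ : ∃ w, w = min (g (v + 1)) (a + N) := ⟨_, rfl⟩
    have hB : BV N (upd N g a w) := by
      apply upd_BV hg a w (by omega) (by omega)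
      · intro hlt b hb1 hb2
        by_cases hbv : b ≤ v
        · have := hg.nest a b (by omega) (by omega) (by omega)
          omega
        · have := hg.nest (v + 1) b (by omega) (by omega) (by omega)
          omega
      · intro e k1 k2 k3 k4
        have k5 := hg.nest e a k1 k3 k4
        have k6 : e ≠ a := by rintro rfl; simp at k2
        have k7 : g e ≠ v := by
          intro h; have := ham e h; omega
        have k8 := hg.nest e (v + 1) k1 (by omega) (by omega)
        omega
    have hle : ∀ e, g e ≤ upd N g a w e := by
      intro e
      by_cases h : N ∣ e - a
      · rw [upd_pos _ _ h, hg.per h]; omega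
      · rw [upd_neg _ _ h]
    refine ⟨_, hB, ?_, hle, ⟨a, ?_, ?_⟩, ?_, ?_⟩
    · intro c hc
      by_cases hinf : ∃ s, g s = s + N
      · obtain ⟨s, hs⟩ := hinf
        obtain ⟨t, ht1, ht2⟩ := hr s hs
        by_cases h : N ∣ s - c
        · refine ⟨t, ?_, ?_⟩
          · intro h'; apply ht1
            rw [show t - s = (t - c) - (s - c) by ring]; exact dvd_sub h' h
          · have := hle t; have := hB.hi t; omega
        · refine ⟨s, h, ?_⟩
          have := hle s; have := hB.hi s; omega
      · push Not at hinf
        exfalso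
        by_cases h : N ∣ c - a
        · rw [upd_pos _ _ h] at hc
          have k0 := hinf (v + 1)
          have k1 := hg.nest (v + 1) (a + N) (by omega) (by omega) (by omega)
          have k2 := hg.per1 a
          have k3 := hg.per1 (v - N + 1)
          rw [show v - N + 1 + N = v + 1 by ring] at k3
          omega
        · rw [upd_neg _ _ h] at hc
          exact hinf c hc
    · rw [ha]; simp
    · rw [upd_self]; omega
    · intro e he
      rw [upd_neg]
      intro h; apply he
      rw [hg.per h, ha, show v + (e - a) - v = e - a by ring]; exact h
    · rintro y hy hyr hyg ⟨c, hc1, hc2⟩ - e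
      by_cases h : N ∣ e - a
      · rw [upd_pos _ _ h, hy.per h]
        have k1 := ham c hc1
        have k2 := hyg a
        have k3 := hg.lo c
        have k4 := hy.hi a
        by_cases k5 : y a = a + N
        · omega
        · have k6 := hy.nest a c (by omega) (by omega) (by omega)
          have k7 := hy.nest a (v + 1) (by omega) (by omega) (by omega)
          have k8 := hyg (v + 1)
          omega
      · rw [upd_neg _ _ h]; exact hyg e

lemma full_unique {N : ℤ} (hN : 0 < N) {g : ℤ → ℤ} (hg : BV N g) {v v' : ℤ}
    (h : g (v - N + 1) = v) (h' : g (v' - N + 1) = v') : N ∣ v - v' := by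
  have q1 := Int.emod_nonneg (v - v') hN.ne'
  have q2 := Int.emod_lt_of_pos (v - v') hN
  have q3 : N ∣ (v' + (v - v') % N) - v := by
    rw [show (v' + (v - v') % N) - v = -((v - v') - (v - v') % N) by ring]
    exact (dvd_neg).2 (Int.dvd_self_sub_emod)
  generalize hr : (v - v') % N = r at *
  have q4 := hg.per (e := v' + r - N + 1) (a := v - N + 1) (by
    rwa [show v' + r - N + 1 - (v - N + 1) = v' + r - v by ring])
  have := hg.nest (v' - N + 1) (v' + r - N + 1) (by omega) (by omega) (by omega)
  have : r = 0 := by omega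
  exact Int.dvd_of_emod_eq_zero (hr.trans this)

lemma upper_exists {N : ℤ} (hN : 0 < N) {g y : ℤ → ℤ} (hg : BV N g) (hy : BV N y)
    (hle : ∀ e, g e ≤ y e) (hne : ∃ e, g e < y e) :
    ∃ v, 0 ≤ v ∧ v < N ∧ g v = v ∧ (∃ a, g a = v ∧ g a < y a) ∧
      (g (v - N + 1) ≠ v ∨ ∀ c, g c < y c → N ∣ g c - v) := by
  have main : ∃ c, g c < y c ∧ (g (g c - N + 1) ≠ g c ∨ ∀ d, g d < y d → N ∣ g d - g c) := by
    by_cases h : ∃ c, g c < y c ∧ g (g c - N + 1) ≠ g c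
    · obtain ⟨c, h1, h2⟩ := h; exact ⟨c, h1, Or.inl h2⟩
    · push Not at h
      obtain ⟨e, he⟩ := hne
      exact ⟨e, he, Or.inr fun d hd => full_unique hN hg (h d hd) (h e he)⟩
  obtain ⟨c, hc, hor⟩ := main
  have hd : N ∣ g c % N - g c := by
    rw [show g c % N - g c = -(g c - g c % N) by ring]
    exact (dvd_neg).2 (Int.dvd_self_sub_emod)
  have q1 := Int.emod_nonneg (g c) hN.ne'
  have q2 := Int.emod_lt_of_pos (g c) hN
  generalize g c % N = r at *
  have hfix : g (g c) = g c := by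
    have := hy.hi c
    have := hg.nest c (g c) (by omega) (hg.lo c) le_rfl
    have := hg.lo (g c)
    omega
  have hgr := hg.per hd
  have hs : N ∣ (c + (r - g c)) - c := by rwa [show (c + (r - g c)) - c = r - g c by ring]
  have p1 := hg.per hs
  have p2 := hy.per hs
  refine ⟨r, q1, q2, by omega, ⟨c + (r - g c), by omega, by omega⟩, ?_⟩
  rcases hor with h | h
  · left
    have p3 := hg.per (e := r - N + 1) (a := g c - N + 1) (by
      rwa [show r - N + 1 - (g c - N + 1) = r - g c by ring])
    omega
  · right
    intro d hd'
    rw [show g d - r = (g d - g c) - (r - g c) by ring]; exact dvd_sub (h d hd') hd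

def ofBV {n : ℕ} (g : ℤ → ℤ) (h : BV (n : ℤ) g) : TITO n where
  rel a b := a = b ∨ (a < b ∧ ¬ (b ≤ g a ∨ g a = a + n)) ∨ (b < a ∧ (a ≤ g b ∨ g b = b + n))
  refl a := Or.inl rfl
  antisymm a b h1 h2 := by omega
  trans a b c h1 h2 := by
    have n1 := h.nest a b
    have n2 := h.nest a c
    have n3 := h.nest b a
    have n4 := h.nest b c
    have n5 := h.nest c a
    have n6 := h.nest c b
    have i1 := h.hi a
    have i2 := h.hi b
    have i3 := h.hi c
    have l1 := h.lo a
    have l2 := h.lo b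
    have l3 := h.lo c
    rcases h1 with rfl | ⟨p1, q1⟩ | ⟨p1, q1⟩
    · exact h2
    · rcases h2 with rfl | ⟨p2, q2⟩ | ⟨p2, q2⟩
      · exact Or.inr (Or.inl ⟨p1, q1⟩)
      · clear n2 n3 n4 n5 n6
        rcases lt_trichotomy a c with h | h | h <;> omega
      · clear n1 n3 n4 n6
        rcases lt_trichotomy a c with h | h | h <;> omega
    · rcases h2 with rfl | ⟨p2, q2⟩ | ⟨p2, q2⟩
      · exact Or.inr (Or.inr ⟨p1, q1⟩)
      · clear n1 n4 n5 n6
        rcases lt_trichotomy a c with h | h | h <;> omega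
      · clear n1 n2 n3 n4 n5
        rcases lt_trichotomy a c with h | h | h <;> omega
  total a b := by omega
  invariant a b := by
    have := h.per1 a
    have := h.per1 b
    omega

lemma mem_inv_ofBV {n : ℕ} {g : ℤ → ℤ} (h : BV (n : ℤ) g) (a b : ℤ) :
    (a, b) ∈ (ofBV g h).Inversions ↔ a < b ∧ (b ≤ g a ∨ g a = a + n) := by
  simp only [TITO.Inversions, Set.mem_setOf_eq, ofBV]
  omega

lemma rel_iff_inv {n : ℕ} (t : TITO n) (a b : ℤ) :
    t.rel a b ↔ a = b ∨ (a < b ∧ (a, b) ∉ t.Inversions) ∨ (b < a ∧ (b, a) ∈ t.Inversions) := by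
  simp only [TITO.Inversions, Set.mem_setOf_eq]
  constructor
  · intro h
    rcases lt_trichotomy a b with h1 | h1 | h1
    · right; left
      refine ⟨h1, fun h2 => ?_⟩
      have := t.antisymm a b h h2.2
      omega
    · exact Or.inl h1
    · exact Or.inr (Or.inr ⟨h1, h1, h⟩)
  · rintro (rfl | ⟨h1, h2⟩ | ⟨_, _, h⟩)
    · exact t.refl a
    · rcases t.total a b with h | h
      · exact h
      · exact absurd ⟨h1, h⟩ h2
    · exact h

lemma tito_ext {n : ℕ} {t s : TITO n} (h : t.Inversions = s.Inversions) : t = s := by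
  have : t.rel = s.rel := by
    funext a b
    rw [eq_iff_iff, rel_iff_inv, rel_iff_inv, h]
  cases t; cases s; simp at this; subst this; rfl

lemma inv_sub_iff {n : ℕ} (hn : 0 < n) {g g' : ℤ → ℤ} (h : BV (n : ℤ) g) (h' : BV (n : ℤ) g') :
    (ofBV g h).Inversions ⊆ (ofBV g' h').Inversions ↔ ∀ a, g a ≤ g' a := by
  constructor
  · intro hs a
    have h1 := h.lo a
    have h2 := h.hi a
    have h3 := h'.lo a
    by_cases h4 : g a = a
    · omega
    · have := hs ((mem_inv_ofBV h a (g a)).2 ⟨by omega, by omega⟩)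
      rw [mem_inv_ofBV] at this
      omega
  · rintro hs ⟨a, b⟩ hab
    rw [mem_inv_ofBV] at hab ⊢
    have := hs a
    have := h'.hi a
    omega

lemma ofBV_avoids {n : ℕ} {g : ℤ → ℤ} (h : BV (n : ℤ) g) : (ofBV g h).Avoids312 := by
  rintro ⟨a, b, c, h1, h2, h3, h4⟩
  simp only [ofBV] at h3 h4
  omega

lemma ofBV_real {n : ℕ} (hn : 0 < n) {g : ℤ → ℤ} (h : BV (n : ℤ) g) :
    (ofBV g h).IsReal ↔ RealV n g := by
  have hinf : ∀ a, ¬ (ofBV g h).rel a (a + n) ↔ g a = a + n := by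
    intro a
    have := h.hi a
    simp only [ofBV]
    omega
  constructor
  · intro hr a ha
    by_contra hno
    push Not at hno
    refine (hinf a).2 ha (hr a ?_)
    rintro _ ⟨k, rfl⟩ _ ⟨m, rfl⟩ y h1 h2
    have e1 := h.perk a k
    have e2 := h.perk a m
    rw [mul_comm] at e1 e2
    by_contra hy
    have hy' : ¬ (n : ℤ) ∣ y - a := by
      rintro ⟨k, hk⟩; exact hy ⟨k, by linarith⟩
    have h3 := hno y hy'
    have h4 := h.nest y (a + k * n)
    have h5 := h.hi y
    have h6 : a + k * n ≠ y := fun e => hy ⟨k, e.symm⟩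
    simp only [ofBV] at h1 h2
    rw [mul_comm] at e1 e2
    rw [mul_comm k] at *
    omega
  · intro hr a hc
    by_contra hno
    have ha := (hinf a).1 hno
    obtain ⟨b, hb, hb'⟩ := hr a ha
    have key : ∀ c d, g c = c + n → g d = d + n → ∃ k : ℤ, (ofBV g h).rel (c + n * k) d := by
      intro c d h1 h2
      refine ⟨|d - c| + 1, ?_⟩
      have h3 : (1 : ℤ) ≤ n := by exact_mod_cast hn
      have h4 : d - c ≤ |d - c| := le_abs_self _
      have h5 : |d - c| + 1 ≤ n * (|d - c| + 1) := by nlinarith [abs_nonneg (d - c)]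
      simp only [ofBV]
      omega
    obtain ⟨k, hk⟩ := key a b ha hb'
    obtain ⟨m, hm⟩ := key b a hb' ha
    have hm' : (ofBV g h).rel b (a + n * (-m)) := by
      have e1 := h.perk b m
      have e2 := h.perk a (-m)
      rw [mul_neg] at *
      simp only [ofBV] at hm ⊢
      omega
    obtain ⟨j, hj⟩ := hc _ ⟨k, by rw [mul_comm]⟩ _ ⟨-m, by rw [mul_comm]⟩ b hk hm'
    exact hb ⟨j, by rw [hj]; ring⟩

lemma exists_BV {n : ℕ} (hn : 0 < n) (t : TITO n) (ht : t.Avoids312) :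
    ∃ g, ∃ h : BV (n : ℤ) g, t = ofBV g h := by
  have inv : ∀ a b, t.rel (a + n) (b + n) ↔ t.rel a b := fun a b => (t.invariant a b).symm
  have av : ∀ a b c, a ≤ b → b ≤ c → t.rel c a → t.rel b a := by
    intro a b c h1 h2 h3
    rcases eq_or_lt_of_le h1 with rfl | h1
    · exact t.refl _
    rcases eq_or_lt_of_le h2 with rfl | h2
    · exact h3
    rcases t.total a b with h | h
    · exact absurd ⟨a, b, c, h1, h2, h3, h⟩ ht
    · exact h
  have hex : ∀ a : ℤ, ∃ v, (a ≤ v ∧ v ≤ a + n ∧ t.rel v a) ∧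
      ∀ z, (a ≤ z ∧ z ≤ a + n ∧ t.rel z a) → z ≤ v := fun a =>
    Int.exists_greatest_of_bdd (P := fun v => a ≤ v ∧ v ≤ a + n ∧ t.rel v a)
      ⟨a + n, fun z hz => hz.2.1⟩ ⟨a, le_rfl, by omega, t.refl a⟩
  choose g hg hgm using hex
  have per : ∀ a, g (a + n) = g a + n := by
    intro a
    apply le_antisymm
    · have h1 := hg (a + n)
      have h2 := hgm a (g (a + n) - n) ⟨by omega, by omega, by
        rw [← inv]; simpa using h1.2.2⟩
      omega
    · have h1 := hg a
      exact hgm (a + n) (g a + n) ⟨by omega, by omega, (inv _ _).2 h1.2.2⟩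
  have wane : ∀ a, g a = a + n → ∀ k : ℕ, t.rel (a + n * k) a := by
    intro a ha k
    have h0 : t.rel (a + n) a := by rw [← ha]; exact (hg a).2.2
    induction k with
    | zero => simpa using t.refl a
    | succ k ih =>
      have := t.trans _ _ _ ((inv _ _).2 ih) h0
      push_cast
      rwa [show a + (n : ℤ) * (k + 1) = a + n * k + n by ring]
  have hI : ∀ a b, a < b → (t.rel b a ↔ (b ≤ g a ∨ g a = a + n)) := by
    intro a b hab
    constructor
    · intro h
      by_cases hb : b ≤ a + n
      · left; exact hgm a b ⟨hab.le, hb, h⟩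
      · right
        have := hgm a (a + n) ⟨by omega, le_rfl, av a (a + n) b (by omega) (by omega) h⟩
        have := (hg a).2.1
        omega
    · rintro (h | h)
      · exact av a b (g a) hab.le h (hg a).2.2
      · have h1 := wane a h (b - a).toNat
        refine av a b _ hab.le ?_ h1
        have h3 : (1 : ℤ) ≤ n := by exact_mod_cast hn
        have h4 : ((b - a).toNat : ℤ) = b - a := Int.toNat_of_nonneg (by omega)
        rw [h4]
        nlinarith
  have hB : BV (n : ℤ) g := by
    refine ⟨fun a => (hg a).1, fun a => (hg a).2.1, per, ?_⟩
    intro a b h1 h2 h3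
    rcases eq_or_lt_of_le h2 with rfl | h2
    · exact le_rfl
    have k1 := (hI a b h2).2 (Or.inl h3)
    have k2 := t.trans _ _ _ (hg b).2.2 k1
    have := (hg b).1
    have := (hI a (g b) (by omega)).1 k2
    omega
  refine ⟨g, hB, tito_ext ?_⟩
  ext ⟨a, b⟩
  rw [mem_inv_ofBV]
  simp only [TITO.Inversions, Set.mem_setOf_eq]
  constructor
  · rintro ⟨h1, h2⟩; exact ⟨h1, (hI a b h1).1 h2⟩
  · rintro ⟨h1, h2⟩; exact ⟨h1, (hI a b h1).2 h2⟩

lemma count_lower {n : ℕ} (P : Set (TITO n)) (x : TITO n) (hx : x ∈ P) (R : Finset ℤ)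
    (F : ℤ → TITO n) (h1 : ∀ a ∈ R, F a ∈ P ∧ (F a).Inversions ⊂ x.Inversions)
    (h2 : ∀ y ∈ P, y.Inversions ⊂ x.Inversions → ∃ a ∈ R, y.Inversions ⊆ (F a).Inversions)
    (h3 : ∀ a ∈ R, ∀ b ∈ R, (F a).Inversions ⊆ (F b).Inversions → a = b) :
    {y : TITO n | CoversIn P y x}.ncard = R.card := by
  have : {y : TITO n | CoversIn P y x} = F '' (R : Set ℤ) := by
    ext y
    simp only [Set.mem_setOf_eq, Set.mem_image, Finset.mem_coe]
    constructor
    · rintro ⟨hy, _, hlt, hno⟩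
      obtain ⟨a, ha, hle⟩ := h2 y hy hlt
      refine ⟨a, ha, ?_⟩
      by_contra hne
      refine hno ⟨F a, (h1 a ha).1, ?_, (h1 a ha).2⟩
      exact hle.ssubset_of_ne fun h => hne (tito_ext h.symm)
    · rintro ⟨a, ha, rfl⟩
      refine ⟨(h1 a ha).1, hx, (h1 a ha).2, ?_⟩
      rintro ⟨z, hz, hz1, hz2⟩
      obtain ⟨b, hb, hle⟩ := h2 z hz hz2
      obtain rfl := h3 a ha b hb (hz1.subset.trans hle)
      exact hz1.not_subset hle
  rw [this, Set.ncard_image_of_injOn, Set.ncard_coe_finset]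
  intro a ha b hb hab
  exact h3 a ha b hb (by rw [hab])

lemma count_upper {n : ℕ} (P : Set (TITO n)) (x : TITO n) (hx : x ∈ P) (R : Finset ℤ)
    (F : ℤ → TITO n) (h1 : ∀ a ∈ R, F a ∈ P ∧ x.Inversions ⊂ (F a).Inversions)
    (h2 : ∀ y ∈ P, x.Inversions ⊂ y.Inversions → ∃ a ∈ R, (F a).Inversions ⊆ y.Inversions)
    (h3 : ∀ a ∈ R, ∀ b ∈ R, (F a).Inversions ⊆ (F b).Inversions → a = b) :
    {y : TITO n | CoversIn P x y}.ncard = R.card := by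
  have : {y : TITO n | CoversIn P x y} = F '' (R : Set ℤ) := by
    ext y
    simp only [Set.mem_setOf_eq, Set.mem_image, Finset.mem_coe]
    constructor
    · rintro ⟨_, hy, hlt, hno⟩
      obtain ⟨a, ha, hle⟩ := h2 y hy hlt
      refine ⟨a, ha, ?_⟩
      by_contra hne
      refine hno ⟨F a, (h1 a ha).1, (h1 a ha).2, ?_⟩
      exact hle.ssubset_of_ne fun h => hne (tito_ext h)
    · rintro ⟨a, ha, rfl⟩
      refine ⟨hx, (h1 a ha).1, (h1 a ha).2, ?_⟩
      rintro ⟨z, hz, hz1, hz2⟩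
      obtain ⟨b, hb, hle⟩ := h2 z hz hz1
      obtain rfl := h3 b hb a ha (hle.trans hz2.subset)
      exact hz2.not_subset hle
  rw [this, Set.ncard_image_of_injOn, Set.ncard_coe_finset]
  intro a ha b hb hab
  exact h3 a ha b hb (by rw [hab])

lemma inv_ssub_iff {n : ℕ} (hn : 0 < n) {g g' : ℤ → ℤ} (h : BV (n : ℤ) g) (h' : BV (n : ℤ) g') :
    (ofBV g h).Inversions ⊂ (ofBV g' h').Inversions ↔ (∀ a, g a ≤ g' a) ∧ ∃ a, g a < g' a := by
  rw [ssubset_iff_subset_not_subset, inv_sub_iff hn, inv_sub_iff hn]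
  push Not
  rfl

theorem stmt11 (n : ℕ) (hn : 2 ≤ n) (x : TITO n) (hx : x.Avoids312 ∧ x.IsReal) :
    {y : TITO n | CoversIn {t : TITO n | t.Avoids312 ∧ t.IsReal} y x}.ncard +
      {y : TITO n | CoversIn {t : TITO n | t.Avoids312 ∧ t.IsReal} x y}.ncard = n := by
  classical
  have hn0 : 0 < n := by omega
  have hN2 : (2 : ℤ) ≤ n := by exact_mod_cast hn
  have hN : (0 : ℤ) < n := by omega
  obtain ⟨g, hg, rfl⟩ := exists_BV hn0 x hx.1
  have hr := (ofBV_real hn0 hg).1 hx.2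
  have hdv : ∀ a b : ℤ, 0 ≤ a → a < n → 0 ≤ b → b < n → (n : ℤ) ∣ a - b → a = b := by
    intro a b h1 h2 h3 h4 h5
    have := dvd_small h5 (by omega) (by omega)
    omega
  have low : {y : TITO n | CoversIn {t : TITO n | t.Avoids312 ∧ t.IsReal} y (ofBV g hg)}.ncard
      = ((Finset.Ico (0 : ℤ) n).filter (fun a => ¬ g a = a)).card := by
    have H := fun a (ha : g a ≠ a) => lower_one hN hg hr a ha
    choose! l hlB hlR hle hlt hcases hstab hdom using H
    refine count_lower _ _ hx _
      (fun a => if ha : g a ≠ a then ofBV (l a) (hlB a ha) else ofBV g hg) ?_ ?_ ?_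
    · intro a ha
      simp only [Finset.mem_filter, Finset.mem_Ico] at ha
      have ha' : g a ≠ a := ha.2
      simp only [dif_pos ha']
      refine ⟨⟨ofBV_avoids _, (ofBV_real hn0 _).2 (hlR a ha')⟩, ?_⟩
      rw [inv_ssub_iff hn0]
      exact ⟨hle a ha', a, hlt a ha'⟩
    · rintro y ⟨hy1, hy2⟩ hyx
      obtain ⟨f, hf, rfl⟩ := exists_BV hn0 y hy1
      rw [ofBV_real hn0] at hy2
      rw [inv_ssub_iff hn0] at hyx
      obtain ⟨a, h1, h2, h3, h4⟩ := lower_exists hN hg hf hyx.1 hyx.2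
      have ha' : g a ≠ a := by have := hf.lo a; omega
      refine ⟨a, by simp [h1, h2, ha'], ?_⟩
      simp only [dif_pos ha']
      rw [inv_sub_iff hn0]
      exact hdom a ha' f hf hy2 hyx.1 h3 h4
    · intro a ha b hb hab
      simp only [Finset.mem_filter, Finset.mem_Ico] at ha hb
      have ha' : g a ≠ a := ha.2
      have hb' : g b ≠ b := hb.2
      simp only [dif_pos ha', dif_pos hb'] at hab
      rw [inv_sub_iff hn0] at hab
      by_contra hne
      refine lower_anti hN hg (a := a) (a' := b) ?_ (hcases a ha') (hlt b hb') (hstab b hb') hab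
      intro h
      exact hne (hdv b a hb.1.1 hb.1.2 ha.1.1 ha.1.2 h).symm
  have up : {y : TITO n | CoversIn {t : TITO n | t.Avoids312 ∧ t.IsReal} (ofBV g hg) y}.ncard
      = ((Finset.Ico (0 : ℤ) n).filter (fun a => g a = a)).card := by
    have H := fun a (ha : g a = a) => upper_one hN2 hg hr a ha
    choose! u huB huR hle hlt hcases hdom using H
    refine count_upper _ _ hx _
      (fun a => if ha : g a = a then ofBV (u a) (huB a ha) else ofBV g hg) ?_ ?_ ?_
    · intro a ha
      simp only [Finset.mem_filter, Finset.mem_Ico] at ha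
      have ha' : g a = a := ha.2
      simp only [dif_pos ha']
      refine ⟨⟨ofBV_avoids _, (ofBV_real hn0 _).2 (huR a ha')⟩, ?_⟩
      rw [inv_ssub_iff hn0]
      obtain ⟨e, _, he⟩ := hlt a ha'
      exact ⟨hle a ha', e, he⟩
    · rintro y ⟨hy1, hy2⟩ hyx
      obtain ⟨f, hf, rfl⟩ := exists_BV hn0 y hy1
      rw [ofBV_real hn0] at hy2
      rw [inv_ssub_iff hn0] at hyx
      obtain ⟨a, h1, h2, h3, h4, h5⟩ := upper_exists hN hg hf hyx.1 hyx.2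
      refine ⟨a, by simp [h1, h2, h3], ?_⟩
      simp only [dif_pos h3]
      rw [inv_sub_iff hn0]
      exact hdom a h3 f hf hy2 hyx.1 h4 h5
    · intro a ha b hb hab
      simp only [Finset.mem_filter, Finset.mem_Ico] at ha hb
      have ha' : g a = a := ha.2
      have hb' : g b = b := hb.2
      simp only [dif_pos ha', dif_pos hb'] at hab
      rw [inv_sub_iff hn0] at hab
      obtain ⟨e, he1, he2⟩ := hlt a ha'
      by_contra hne
      have h3 : ¬ (n : ℤ) ∣ g e - b := by
        intro h4
        apply hne
        apply hdv a b ha.1.1 ha.1.2 hb.1.1 hb.1.2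
        rw [show a - b = (g e - b) - (g e - a) by ring]; exact dvd_sub h4 he1
      have h4 := hcases b hb' e h3
      have h5 := hab e
      omega
  rw [low, up, add_comm, Finset.card_filter_add_card_filter_not]
  simp
end

section
/- The number of 312-avoiding TITOs equals the type B_n Catalan number: the cardinality of the set of 312-avoiding TITOs is the binomial coefficient C(2n, n). -/
namespace TITOCount

lemma card_bounded (n : ℕ) :
    Nat.card {d : Fin n → ℕ // ∑ i, d i ≤ n} = Nat.choose (2 * n) n := by
  have e : {d : Fin n → ℕ // ∑ i, d i ≤ n} ≃ {P : Fin (n+1) → ℕ // ∑ i, P i = n} :=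
    { toFun := fun d => ⟨Fin.cons (n - ∑ i, d.1 i) d.1, by
        have := d.2
        rw [Fin.sum_univ_succ]; simp; omega⟩
      invFun := fun P => ⟨Fin.tail P.1, by
        have := P.2
        rw [Fin.sum_univ_succ] at this
        simp only [Fin.tail]; omega⟩
      left_inv := fun d => by simp
      right_inv := fun P => by
        apply Subtype.ext
        have h := P.2
        rw [Fin.sum_univ_succ] at h
        have : n - ∑ i, Fin.tail P.1 i = P.1 0 := by simp only [Fin.tail]; omega
        simp only [this]
        exact Fin.cons_self_tail P.1 }
  rw [Nat.card_congr (e.trans (Sym.equivNatSumOfFintype (Fin (n+1)) n).symm),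
    Nat.card_eq_fintype_card, Sym.card_sym_eq_choose]
  simp
  congr 1
  omega

lemma exists_primitive (u : ℤ → ℤ) : ∃ H : ℤ → ℤ, ∀ m, H m = H (m - 1) + u m := by
  refine ⟨fun m => ∑ i ∈ Finset.Ioc 0 m, u i - ∑ i ∈ Finset.Ioc m 0, u i, fun m => ?_⟩
  rcases lt_or_ge 0 m with h | h
  · have h1 : Finset.Ioc 0 m = insert m (Finset.Ioc 0 (m-1)) := by
      ext x; simp; omega
    have h2 : Finset.Ioc m 0 = ∅ := by ext x; simp; omega
    have h3 : Finset.Ioc (m-1) 0 = ∅ := by ext x; simp; omega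
    simp only [h1, h2, h3]
    rw [Finset.sum_insert (by simp)]
    simp; ring
  · have h1 : Finset.Ioc (m-1) 0 = insert m (Finset.Ioc m 0) := by
      ext x; simp; omega
    have h2 : Finset.Ioc 0 m = ∅ := by ext x; simp; omega
    have h3 : Finset.Ioc 0 (m-1) = ∅ := by ext x; simp; omega
    simp only [h1, h2, h3]
    rw [Finset.sum_insert (by simp)]
    simp

lemma primitive_sum {u H : ℤ → ℤ} (hH : ∀ m, H m = H (m - 1) + u m) (a m : ℤ) (h : a - 1 ≤ m) :
    H m = H (a - 1) + ∑ i ∈ Finset.Icc a m, u i := by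
  induction m, h using Int.leInduction with
  | base =>
    simp
  | succ m hm ih =>
    have : Finset.Icc a (m+1) = insert (m+1) (Finset.Icc a m) := by
      ext x; simp; omega
    rw [this, Finset.sum_insert (by simp), hH (m+1)]
    simp [ih]; ring

open Classical in
noncomputable def cset {n : ℕ} (t : TITO n) (m : ℤ) : Finset ℤ :=
  {a ∈ Finset.Ioc (m - n) m | t.rel m a ∧ ¬ t.rel (m+1) a}

noncomputable def cc {n : ℕ} (t : TITO n) (m : ℤ) : ℕ := (cset t m).card

lemma av {n : ℕ} {t : TITO n} (ht : t.Avoids312) {a b c : ℤ} (hab : a ≤ b) (hbc : b ≤ c)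
    (h : t.rel c a) : t.rel b a := by
  rcases hab.eq_or_lt with rfl | hab
  · exact t.refl _
  rcases hbc.eq_or_lt with rfl | hbc
  · exact h
  by_contra hb
  exact ht ⟨a, b, c, hab, hbc, h, (t.total a b).resolve_right hb⟩

lemma mem_cset {n : ℕ} (hn : 2 ≤ n) {t : TITO n} (ht : t.Avoids312) {a m : ℤ} :
    a ∈ cset t m ↔ a ≤ m ∧ t.rel m a ∧ ¬ t.rel (m+1) a := by
  classical
  simp only [cset, Finset.mem_filter, Finset.mem_Ioc]
  constructor
  · rintro ⟨⟨_, h⟩, h'⟩; exact ⟨h, h'⟩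
  · rintro ⟨h, h1, h2⟩
    refine ⟨⟨?_, h⟩, h1, h2⟩
    by_contra hc
    have h3 : t.rel (a + n) a := av ht (by omega) (by omega) h1
    have h4 := (t.invariant m a).1 h1
    exact h2 (av ht (by omega) (by omega) (t.trans _ _ _ h4 h3))

lemma cset_unique {n : ℕ} (hn : 2 ≤ n) {t : TITO n} (ht : t.Avoids312) {a m m' : ℤ}
    (h : a ∈ cset t m) (h' : a ∈ cset t m') : m = m' := by
  rw [mem_cset hn ht] at h h'
  rcases lt_trichotomy m m' with hl | hl | hl
  · exact absurd (av ht (by omega) (by omega) h'.2.1) h.2.2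
  · exact hl
  · exact absurd (av ht (by omega) (by omega) h.2.1) h'.2.2

lemma exists_cset {n : ℕ} (hn : 2 ≤ n) {t : TITO n} (ht : t.Avoids312) {a b : ℤ}
    (hab : a ≤ b) (h : ¬ t.rel b a) : ∃ m, m < b ∧ a ∈ cset t m := by
  induction b, hab using Int.leInduction with
  | base => exact absurd (t.refl _) h
  | succ m hm ih =>
    by_cases h1 : t.rel m a
    · exact ⟨m, by omega, (mem_cset hn ht).2 ⟨hm, h1, h⟩⟩
    · obtain ⟨k, hk, h2⟩ := ih h1
      exact ⟨k, by omega, h2⟩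

lemma sum_cc {n : ℕ} (hn : 2 ≤ n) {t : TITO n} (ht : t.Avoids312) (s : Finset ℤ) :
    ∑ j ∈ s, cc t j = (s.biUnion (cset t)).card := by
  rw [Finset.card_biUnion]
  · rfl
  · intro i _ j _ hij
    refine Finset.disjoint_left.2 ?_
    intro x hx hx'
    exact hij (cset_unique hn ht hx hx')

lemma rel_iff {n : ℕ} (hn : 2 ≤ n) {t : TITO n} (ht : t.Avoids312) {H : ℤ → ℤ}
    (hH : ∀ m, H m = H (m - 1) + (1 - (cc t m : ℤ))) {a b : ℤ} (hab : a ≤ b) :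
    t.rel b a ↔ ∀ m, a ≤ m → m < b → H (a-1) < H m := by
  have key : ∀ m, a ≤ m → H m = H (a-1) + (m - a + 1)
      - (((Finset.Icc a m).biUnion (cset t)).card : ℤ) := by
    intro m hm
    rw [primitive_sum hH a m (by omega), Finset.sum_sub_distrib, ← sum_cc hn ht]
    push_cast
    simp
    omega
  constructor
  · intro h m hm hmb
    rw [key m hm]
    have h1 : t.rel (m+1) a := av ht (by omega) (by omega) h
    have : (Finset.Icc a m).biUnion (cset t) ⊆ Finset.Ioc a m := by
      intro x hx
      simp only [Finset.mem_biUnion, Finset.mem_Icc, mem_cset hn ht] at hx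
      obtain ⟨j, ⟨h2, h3⟩, h4, h5, h6⟩ := hx
      rw [Finset.mem_Ioc]
      refine ⟨?_, by omega⟩
      by_contra hc
      have h7 : t.rel a x := av ht (by omega) h2 h5
      exact h6 (t.trans _ _ _ (av ht (b := j+1) (by omega) (by omega) h1) h7)
    have := Finset.card_le_card this
    simp at this
    omega
  · intro h
    by_contra hc
    obtain ⟨m, hmb, hm⟩ := exists_cset hn ht hab hc
    have hm' := (mem_cset hn ht).1 hm
    have h1 := h m hm'.1 hmb
    rw [key m hm'.1] at h1
    have : Finset.Icc a m ⊆ (Finset.Icc a m).biUnion (cset t) := by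
      intro x hx
      rw [Finset.mem_Icc] at hx
      have h2 : t.rel x a := av ht hx.1 hx.2 hm'.2.1
      have h3 : ¬ t.rel (m+1) x := fun h3 => hm'.2.2 (t.trans _ _ _ h3 h2)
      obtain ⟨j, hj, h4⟩ := exists_cset hn ht (by omega) h3
      have := (mem_cset hn ht).1 h4
      simp only [Finset.mem_biUnion, Finset.mem_Icc]
      exact ⟨j, ⟨by omega, by omega⟩, h4⟩
    have := Finset.card_le_card this
    simp at this
    omega

lemma cc_periodic {n : ℕ} (t : TITO n) (m : ℤ) : cc t (m + n) = cc t m := by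
  symm
  classical
  refine Finset.card_bij (fun a _ => a + n) ?_ ?_ ?_
  · intro a ha
    simp only [cset, Finset.mem_filter, Finset.mem_Ioc] at ha ⊢
    rw [t.invariant m a, t.invariant (m+1) a] at ha
    have : m + n + 1 = m + 1 + n := by ring
    rw [this]
    exact ⟨by omega, ha.2⟩
  · intro a _ b _ h
    simpa using h
  · intro b hb
    refine ⟨b - n, ?_, by simp⟩
    simp only [cset, Finset.mem_filter, Finset.mem_Ioc] at hb ⊢
    rw [t.invariant m, t.invariant (m+1)]
    have : m + n + 1 = m + 1 + n := by ring
    rw [this] at hb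
    rw [sub_add_cancel]
    exact ⟨by omega, hb.2⟩

lemma rel_shift {n : ℕ} (t : TITO n) (k : ℤ) (a b : ℤ) :
    t.rel a b ↔ t.rel (a + n * k) (b + n * k) := by
  induction k using Int.induction_on with
  | zero => simp
  | succ i ih =>
    rw [ih, t.invariant]
    ring_nf
  | pred i ih =>
    rw [ih, t.invariant (a + n * (-(i:ℤ) - 1))]
    ring_nf

lemma cc_sum_le {n : ℕ} (hn : 2 ≤ n) {t : TITO n} (ht : t.Avoids312) :
    ∑ i ∈ Finset.Ico (0:ℤ) n, cc t i ≤ n := by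
  rw [sum_cc hn ht]
  have : n = (Finset.Ico (0:ℤ) n).card := by simp
  conv_rhs => rw [this]
  have hpos : (0:ℤ) < n := by omega
  apply Finset.card_le_card_of_injOn (fun x : ℤ => x % (n:ℤ))
  · intro x _
    simp only [Finset.coe_Ico, Set.mem_Ico]
    exact ⟨Int.emod_nonneg _ (by omega), Int.emod_lt_of_pos _ hpos⟩
  · intro x hx y hy hxy
    simp only [Finset.coe_biUnion, Set.mem_iUnion, Finset.mem_coe, Finset.mem_Ico] at hx hy
    obtain ⟨i, hi, hx⟩ := hx
    obtain ⟨j, hj, hy⟩ := hy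
    obtain ⟨k, hk⟩ : (n:ℤ) ∣ y - x := Int.ModEq.dvd hxy
    have hy' : y = x + n * k := by linarith
    have h1 : y ∈ cset t (i + n * k) := by
      rw [mem_cset hn ht] at hx ⊢
      rw [rel_shift t k i x, rel_shift t k (i+1) x, ← hy'] at hx
      have : i + n * k + 1 = i + 1 + n * k := by ring
      rw [this]
      exact ⟨by linarith, hx.2⟩
    have h2 := cset_unique hn ht h1 hy
    have h3 : k = 0 := by
      have ha : k < 1 := by by_contra h; nlinarith
      have hb : -1 < k := by by_contra h; nlinarith
      omega
    rw [hy', h3]; ring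

/-- The condition deciding `b ≼ a` for `a ≤ b`. -/
def PP (H : ℤ → ℤ) (a b : ℤ) : Prop := ∀ m, a ≤ m → m < b → H (a-1) < H m

lemma PP_self (H : ℤ → ℤ) (a : ℤ) : PP H a a := fun m h h' => by omega

lemma PP_mono {H : ℤ → ℤ} {a b c : ℤ} (hbc : b ≤ c) (h : PP H a c) : PP H a b :=
  fun m h1 h2 => h m h1 (by omega)

lemma PP_trans {H : ℤ → ℤ} {a b c : ℤ} (hab : a ≤ b) (h : PP H a b) (h' : PP H b c) :
    PP H a c := by
  intro m h1 h2
  rcases lt_or_ge m b with h3 | h3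
  · exact h m h1 h3
  rcases hab.eq_or_lt with rfl | hab
  · exact h' m h3 h2
  exact (h (b-1) (by omega) (by omega)).trans (h' m h3 h2)

/-- The TITO of a height function. -/
def ofH (n : ℕ) (H : ℤ → ℤ) (K : ℤ) (hK : ∀ m, H (m + n) = H m + K) : TITO n where
  rel x y := (y ≤ x ∧ PP H y x) ∨ (x < y ∧ ¬ PP H x y)
  refl a := Or.inl ⟨le_refl _, PP_self H a⟩
  antisymm a b h h' := by
    rcases h with ⟨h1, h2⟩ | ⟨h1, h2⟩ <;> rcases h' with ⟨h3, h4⟩ | ⟨h3, h4⟩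
    · omega
    · exact absurd h2 h4
    · exact absurd h4 h2
    · omega
  trans a b c h h' := by
    rcases h with ⟨h1, h2⟩ | ⟨h1, h2⟩ <;> rcases h' with ⟨h3, h4⟩ | ⟨h3, h4⟩
    · exact Or.inl ⟨by omega, PP_trans h3 h4 h2⟩
    · rcases le_or_gt c a with h | h
      · exact absurd (PP_mono h h2) h4
      · exact Or.inr ⟨h, fun hc => h4 (PP_trans h1 h2 hc)⟩
    · rcases le_or_gt c a with h | h
      · refine Or.inl ⟨h, PP_mono (by omega) h4⟩
      · exact Or.inr ⟨h, fun hc => h2 (PP_trans h.le hc h4)⟩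
    · exact Or.inr ⟨by omega, fun hc => h2 (PP_mono h3.le hc)⟩
  total a b := by
    rcases lt_trichotomy a b with h | h | h
    · by_cases h' : PP H a b
      · exact Or.inr (Or.inl ⟨h.le, h'⟩)
      · exact Or.inl (Or.inr ⟨h, h'⟩)
    · subst h; exact Or.inl (Or.inl ⟨le_refl _, PP_self H a⟩)
    · by_cases h' : PP H b a
      · exact Or.inl (Or.inl ⟨h.le, h'⟩)
      · exact Or.inr (Or.inr ⟨h, h'⟩)
  invariant a b := by
    have key : ∀ a b, PP H (a + n) (b + n) ↔ PP H a b := by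
      intro a b
      have h0 : H (a + n - 1) = H (a - 1) + K := by
        rw [← hK]; congr 1; ring
      constructor
      · intro h m h1 h2
        have := h (m + n) (by omega) (by omega)
        rw [hK, h0] at this
        omega
      · intro h m h1 h2
        have h3 := h (m - n) (by omega) (by omega)
        have h4 := hK (m - n)
        rw [sub_add_cancel] at h4
        omega
    simp only [key, add_le_add_iff_right, add_lt_add_iff_right]

lemma ofH_rel {n : ℕ} {H : ℤ → ℤ} {K : ℤ} (hK : ∀ m, H (m + n) = H m + K) {a b : ℤ}
    (hab : a ≤ b) : (ofH n H K hK).rel b a ↔ PP H a b := by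
  constructor
  · rintro (⟨_, h⟩ | ⟨h, _⟩)
    · exact h
    · omega
  · intro h; exact Or.inl ⟨hab, h⟩

lemma ofH_avoids {n : ℕ} {H : ℤ → ℤ} {K : ℤ} (hK : ∀ m, H (m + n) = H m + K) :
    (ofH n H K hK).Avoids312 := by
  rintro ⟨a, b, c, hab, hbc, h1, h2⟩
  rw [ofH_rel hK (by omega)] at h1
  have h3 := (ofH_rel hK hab.le).2 (PP_mono hbc.le h1)
  have := (ofH n H K hK).antisymm _ _ h2 h3
  omega

lemma ofH_cc {n : ℕ} (hn : 2 ≤ n) {H : ℤ → ℤ} {K : ℤ} (hK : ∀ m, H (m + n) = H m + K)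
    (hK0 : 0 ≤ K) {c : ℤ → ℕ} (hH : ∀ m, H m = H (m - 1) + (1 - (c m : ℤ))) (m : ℤ) :
    cc (ofH n H K hK) m = c m := by
  have hcard : c m = (Finset.Icc (H m) (H (m-1))).card := by
    have := hH m
    simp; omega
  have hmem : ∀ x, x ∈ cset (ofH n H K hK) m ↔
      x ≤ m ∧ PP H x m ∧ H m ≤ H (x-1) := by
    intro x
    rw [mem_cset hn (ofH_avoids hK)]
    refine and_congr_right fun hx => ?_
    rw [ofH_rel hK hx, ofH_rel hK (by omega)]
    refine and_congr_right fun h1 => ?_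
    constructor
    · intro h2
      by_contra hc
      apply h2
      intro j h3 h4
      rcases eq_or_lt_of_le (show j ≤ m by omega) with rfl | h5
      · omega
      · exact h1 j h3 h5
    · intro h2 h3
      have := h3 m hx (by omega)
      omega
  rw [hcard]
  refine Finset.card_bij (fun x _ => H (x-1)) ?_ ?_ ?_
  · intro x hx
    obtain ⟨h1, h2, h3⟩ := (hmem x).1 hx
    rw [Finset.mem_Icc]
    refine ⟨h3, ?_⟩
    rcases h1.eq_or_lt with rfl | h1
    · exact le_refl _
    · exact (h2 (m-1) (by omega) (by omega)).le
  · intro x hx y hy hxy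
    obtain ⟨h1, h2, h3⟩ := (hmem x).1 hx
    obtain ⟨h4, h5, h6⟩ := (hmem y).1 hy
    rcases lt_trichotomy x y with h | h | h
    · have := h2 (y-1) (by omega) (by omega)
      omega
    · exact h
    · have := h5 (x-1) (by omega) (by omega)
      omega
  · intro v hv
    rw [Finset.mem_Icc] at hv
    obtain ⟨j, ⟨hj1, hj2⟩, hj3⟩ := Int.exists_greatest_of_bdd
      (P := fun j => j < m ∧ H j ≤ v) ⟨m, fun z hz => hz.1.le⟩
      ⟨m - n, by omega, by
        have := hK (m - n)
        rw [sub_add_cancel] at this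
        omega⟩
    have hgt : ∀ k, j < k → k < m → v < H k := by
      intro k h1 h2
      by_contra hc
      have := hj3 k ⟨h2, by omega⟩
      omega
    have hjv : H j = v := by
      rcases eq_or_lt_of_le (show j ≤ m - 1 by omega) with rfl | h
      · omega
      · have h1 := hgt (j+1) (by omega) (by omega)
        have h2 := hH (j+1)
        rw [add_sub_cancel_right] at h2
        omega
    refine ⟨j+1, ?_, by simpa using hjv⟩
    rw [hmem, add_sub_cancel_right, hjv]
    refine ⟨by omega, ?_, hv.1⟩
    intro k h1 h2
    rw [add_sub_cancel_right, hjv]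
    exact hgt k (by omega) h2

lemma ext_rel {n : ℕ} {s t : TITO n} (h : ∀ a b, a ≤ b → (s.rel b a ↔ t.rel b a)) : s = t := by
  have key : s.rel = t.rel := by
    funext x y
    apply propext
    rcases lt_or_ge x y with h1 | h1
    · have h2 := h x y h1.le
      constructor
      · intro h3
        refine (t.total x y).resolve_right fun h4 => ?_
        have := s.antisymm _ _ h3 (h2.2 h4)
        omega
      · intro h3
        refine (s.total x y).resolve_right fun h4 => ?_
        have := t.antisymm _ _ h3 (h2.1 h4)
        omega
    · exact h y x h1
  cases s; cases t; simp only at key; subst key; rfl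

lemma periodic_mod {n : ℕ} {c : ℤ → ℕ} (hc : ∀ m, c (m + n) = c m) (m : ℤ) :
    c m = c (m % n) := by
  have : ∀ k : ℤ, ∀ r, c (r + n * k) = c r := by
    intro k r
    induction k using Int.induction_on with
    | zero => simp
    | succ i ih => rw [← ih, ← hc (r + n * i)]; ring_nf
    | pred i ih => rw [← ih, ← hc (r + n * (-(i:ℤ) - 1))]; ring_nf
  conv_lhs => rw [← Int.emod_add_mul_ediv m n]
  exact this _ _

lemma sum_fin_Ico {n : ℕ} (c : ℤ → ℕ) :
    ∑ i : Fin n, c (i : ℕ) = ∑ i ∈ Finset.Ico (0:ℤ) n, c i := by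
  rw [Fin.sum_univ_eq_sum_range (fun i : ℕ => c (i:ℤ)) n]
  refine Finset.sum_bij (fun i _ => (i:ℤ)) ?_ ?_ ?_ ?_
  · intro a ha; simp at ha ⊢; exact ha
  · intro a _ b _ h; exact_mod_cast h
  · intro b hb
    rw [Finset.mem_Ico] at hb
    exact ⟨b.toNat, by simp; omega, by simp; omega⟩
  · intro a _; rfl

noncomputable def toD {n : ℕ} (hn : 2 ≤ n) (t : {t : TITO n // t.Avoids312}) :
    {d : Fin n → ℕ // ∑ i, d i ≤ n} :=
  ⟨fun i => cc t.1 (i : ℕ), by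
    rw [sum_fin_Ico (cc t.1)]; exact cc_sum_le hn t.2⟩

lemma toD_bij {n : ℕ} (hn : 2 ≤ n) : Function.Bijective (toD hn) := by
  have hpos : (0:ℤ) < n := by omega
  constructor
  · rintro ⟨s, hs⟩ ⟨t, ht⟩ h
    have h1 : ∀ i : Fin n, cc s (i : ℕ) = cc t (i : ℕ) :=
      fun i => congrFun (congrArg Subtype.val h) i
    have h2 : ∀ m, cc s m = cc t m := by
      intro m
      rw [periodic_mod (cc_periodic s), periodic_mod (cc_periodic t)]
      have h3 := Int.emod_nonneg m hpos.ne'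
      have h4 := Int.emod_lt_of_pos m hpos
      have := h1 ⟨(m % n).toNat, by omega⟩
      simpa [Int.toNat_of_nonneg h3] using this
    obtain ⟨H, hH⟩ := exists_primitive (fun m => 1 - (cc s m : ℤ))
    apply Subtype.ext
    apply ext_rel
    intro a b hab
    rw [rel_iff hn hs hH hab, rel_iff hn ht (fun m => by rw [← h2]; exact hH m) hab]
  · rintro ⟨d, hd⟩
    let c : ℤ → ℕ := fun m => d ⟨(m % n).toNat, by
      have h3 := Int.emod_nonneg m hpos.ne'
      have h4 := Int.emod_lt_of_pos m hpos
      omega⟩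
    have hc : ∀ m, c (m + n) = c m := by
      intro m; simp [c]
    have hcd : ∀ i : Fin n, c (i : ℕ) = d i := by
      intro i
      simp only [c]
      congr 1
      apply Fin.ext
      simp only
      rw [Int.emod_eq_of_lt (by omega) (by have := i.2; omega)]
      simp
    obtain ⟨H, hH⟩ := exists_primitive (fun m => 1 - (c m : ℤ))
    obtain ⟨K, hK⟩ : ∃ K, ∀ m, H (m + n) = H m + K := by
      refine ⟨H (0 + n) - H 0, fun m => ?_⟩
      induction m using Int.induction_on with
      | zero => ring
      | succ i ih =>
        have h1 := hH (i + 1 + n)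
        have h2 := hH (i + 1)
        rw [hc, show (i:ℤ) + 1 + n - 1 = i + n by ring] at h1
        rw [add_sub_cancel_right] at h2
        omega
      | pred i ih =>
        have h1 := hH (-i + n)
        have h2 := hH (-i)
        rw [hc, show -(i:ℤ) + n - 1 = -i - 1 + n by ring] at h1
        omega
    have hK0 : 0 ≤ K := by
      have h1 := primitive_sum hH 0 (n-1) (by omega)
      have h2 := hK (-1)
      rw [show (-1:ℤ) + n = n - 1 by ring] at h2
      have h3 : Finset.Icc (0:ℤ) ((n:ℤ)-1) = Finset.Ico (0:ℤ) (n:ℤ) := by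
        ext x; simp
      rw [h3, Finset.sum_sub_distrib, ← Nat.cast_sum, ← sum_fin_Ico c] at h1
      simp only [hcd] at h1
      simp at h1
      have h4 : ((∑ i, d i : ℕ) : ℤ) ≤ n := by exact_mod_cast hd
      push_cast at h4
      omega
    refine ⟨⟨ofH n H K hK, ofH_avoids hK⟩, ?_⟩
    apply Subtype.ext
    funext i
    simp only [toD]
    rw [ofH_cc hn hK hK0 hH, hcd]

end TITOCount

theorem stmt14 (n : ℕ) (hn : 2 ≤ n) :
    Nat.card {t : TITO n // t.Avoids312} = Nat.choose (2 * n) n := by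
  rw [Nat.card_congr (Equiv.ofBijective _ (TITOCount.toD_bij hn)), TITOCount.card_bounded]
end

section
/- The number of 312-avoiding real TITOs equals the type D_n Catalan number: n times the cardinality of the set of 312-avoiding real TITOs equals (3n − 2) · C(2n − 2, n − 1), where C denotes the binomial coefficient. -/
namespace TITO15

open Finset

/-- Sum over an integer interval. -/
noncomputable def S (e : ℤ → ℕ) (a d : ℤ) : ℤ := ∑ i ∈ Finset.Ico a d, (e i : ℤ)

lemma S_add (e : ℤ → ℕ) {a b c : ℤ} (h1 : a ≤ b) (h2 : b ≤ c) : S e a b + S e b c = S e a c := by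
  unfold S
  rw [← Finset.Ico_union_Ico_eq_Ico h1 h2, Finset.sum_union]
  exact Finset.Ico_disjoint_Ico_consecutive a b c

lemma S_one (e : ℤ → ℕ) (a : ℤ) : S e a (a+1) = e a := by
  unfold S
  have : Finset.Ico a (a+1) = {a} := by ext; simp; omega
  rw [this]; simp

lemma S_nonneg (e : ℤ → ℕ) (a d : ℤ) : 0 ≤ S e a d := by
  unfold S; positivity

lemma S_shift (e : ℤ → ℕ) (n : ℕ) (he : ∀ i, e (i + n) = e i) (a d : ℤ) :
    S e (a + n) (d + n) = S e a d := by
  unfold S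
  rw [← Finset.map_add_right_Ico, Finset.sum_map]
  simp [he]

lemma S_period (e : ℤ → ℕ) (n : ℕ) (he : ∀ i, e (i + n) = e i) (a : ℤ) :
    S e a (a + n) = S e 0 n := by
  have key : ∀ x y : ℤ, x ≤ y → S e x (x + n) = S e y (y + n) := by
    intro x y h
    rcases le_total y (x+n) with h' | h'
    · have := S_add e h h'
      have := S_add e h' (show x + n ≤ y + n by omega)
      have := S_shift e n he x y
      omega
    · have := S_add e (show x ≤ x + n by omega) h'
      have := S_add e h' (show y ≤ y + n by omega)
      have := S_add e (show x + n ≤ y by omega) (show y ≤ y + n by omega)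
      have := S_add e h (show y ≤ y + n by omega)
      have := S_shift e n he x y
      omega
  rcases le_total a 0 with h | h
  · simpa using key a 0 h
  · simpa using (key 0 a h).symm

/-- inversion predicate for `a ≤ c` -/
def Inv (e : ℤ → ℕ) (a c : ℤ) : Prop := ∀ d, a < d → d ≤ c → S e a d < d - a

lemma Inv.mono {e : ℤ → ℕ} {a b c : ℤ} (h : Inv e a c) (hb : b ≤ c) : Inv e a b :=
  fun d h1 h2 => h d h1 (h2.trans hb)

lemma Inv.trans {e : ℤ → ℕ} {a b c : ℤ} (hab : a ≤ b) (h : Inv e a b) (h' : Inv e b c) :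
    Inv e a c := by
  intro d h1 h2
  rcases le_or_gt d b with h3 | h3
  · exact h d h1 h3
  · rcases eq_or_lt_of_le hab with rfl | h4
    · exact h' d h1 h2
    have := h b h4 le_rfl
    have := h' d h3 h2
    have := S_add e hab h3.le
    omega

lemma Inv.refl (e : ℤ → ℕ) (a : ℤ) : Inv e a a := fun d h1 h2 => by omega

lemma Inv.shift (e : ℤ → ℕ) (n : ℕ) (he : ∀ i, e (i + n) = e i) (a c : ℤ) :
    Inv e (a + n) (c + n) ↔ Inv e a c := by
  constructor
  · intro h d h1 h2
    have := h (d + n) (by omega) (by omega)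
    rw [S_shift e n he] at this
    omega
  · intro h d h1 h2
    have := h (d - n) (by omega) (by omega)
    have h3 := S_shift e n he a (d - n)
    rw [sub_add_cancel] at h3
    omega

/-- The TITO attached to a periodic function. -/
noncomputable def toTITO (e : ℤ → ℕ) (n : ℕ) (he : ∀ i, e (i + n) = e i) : TITO n where
  rel x y := (x < y ∧ ¬ Inv e x y) ∨ (y ≤ x ∧ Inv e y x)
  refl a := Or.inr ⟨le_rfl, Inv.refl e a⟩
  antisymm a b := by
    rintro (⟨h1, h2⟩ | ⟨h1, h2⟩) (⟨h3, h4⟩ | ⟨h3, h4⟩)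
    · omega
    · exact absurd h4 h2
    · exact absurd h2 h4
    · omega
  trans a b c := by
    rintro (⟨h1, h2⟩ | ⟨h1, h2⟩) (⟨h3, h4⟩ | ⟨h3, h4⟩)
    · exact Or.inl ⟨h1.trans h3, fun h => h2 (h.mono h3.le)⟩
    · rcases lt_or_ge a c with h | h
      · exact Or.inl ⟨h, fun h' => h2 (h'.trans h.le h4)⟩
      · refine Or.inr ⟨h, h4.mono h1.le⟩
    · rcases lt_or_ge a c with h | h
      · exact Or.inl ⟨h, fun h' => h4 (h2.trans h1 h')⟩
      · exact absurd (h2.mono h) h4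
    · exact Or.inr ⟨h3.trans h1, h4.trans h3 h2⟩
  total a b := by
    rcases lt_trichotomy a b with h | h | h
    · by_cases h' : Inv e a b
      · exact Or.inr (Or.inr ⟨h.le, h'⟩)
      · exact Or.inl (Or.inl ⟨h, h'⟩)
    · subst h; exact Or.inl (Or.inr ⟨le_rfl, Inv.refl e a⟩)
    · by_cases h' : Inv e b a
      · exact Or.inl (Or.inr ⟨h.le, h'⟩)
      · exact Or.inr (Or.inl ⟨h, h'⟩)
  invariant a b := by
    simp only [Inv.shift e n he, add_lt_add_iff_right, add_le_add_iff_right]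

lemma toTITO_rel (e : ℤ → ℕ) (n : ℕ) (he : ∀ i, e (i + n) = e i) {a c : ℤ} (h : a ≤ c) :
    (toTITO e n he).rel c a ↔ Inv e a c := by
  unfold toTITO
  simp only
  constructor
  · rintro (⟨h1, h2⟩ | ⟨h1, h2⟩)
    · omega
    · exact h2
  · intro h'; exact Or.inr ⟨h, h'⟩

lemma toTITO_avoids (e : ℤ → ℕ) (n : ℕ) (he : ∀ i, e (i + n) = e i) :
    (toTITO e n he).Avoids312 := by
  rintro ⟨a, b, c, h1, h2, h3, h4⟩
  rw [toTITO_rel e n he (h1.trans h2).le] at h3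
  have := (toTITO_rel e n he h1.le).2 (h3.mono h2.le)
  have := (toTITO e n he).antisymm _ _ this h4
  omega

lemma TITO_ext {n : ℕ} (t t' : TITO n) (h : ∀ a c, a < c → (t.rel c a ↔ t'.rel c a)) : t = t' := by
  have : t.rel = t'.rel := by
    funext x y
    apply propext
    rcases lt_trichotomy x y with h1 | h1 | h1
    · have h2 := h x y h1
      constructor
      · intro h3
        rcases t'.total x y with h4 | h4
        · exact h4
        · have := t.antisymm _ _ h3 (h2.2 h4); omega
      · intro h3
        rcases t.total x y with h4 | h4
        · exact h4
        · have := t'.antisymm _ _ h3 (h2.1 h4); omega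
    · subst h1; exact ⟨fun _ => t'.refl _, fun _ => t.refl _⟩
    · exact h y x h1
  cases t; cases t'
  simp only [TITO.mk.injEq]
  exact this

open Classical in
/-- the finset of `a` whose interval ends at `c` -/
noncomputable def ends {n : ℕ} (t : TITO n) (c : ℤ) : Finset ℤ :=
  (Finset.Ioc (c - n) c).filter (fun a => t.rel c a ∧ ¬ t.rel (c + 1) a)

/-- number of `a` whose interval ends at `c` -/
noncomputable def cnt {n : ℕ} (t : TITO n) (c : ℤ) : ℕ := (ends t c).card

lemma cnt_periodic {n : ℕ} (t : TITO n) (c : ℤ) : cnt t (c + n) = cnt t c := by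
  unfold cnt
  symm
  apply Finset.card_bij (fun (a : ℤ) _ => a + (n : ℤ))
  · intro a ha
    simp only [ends, Finset.mem_filter, Finset.mem_Ioc] at ha ⊢
    have := t.invariant c a
    have h2 := t.invariant (c+1) a
    rw [show c + 1 + n = c + n + 1 by ring] at h2
    refine ⟨by omega, this.1 ha.2.1, fun h => ha.2.2 (h2.2 h)⟩
  · intro a _ b _ h; omega
  · intro a ha
    refine ⟨a - n, ?_, by omega⟩
    simp only [ends, Finset.mem_filter, Finset.mem_Ioc] at ha ⊢
    have := t.invariant c (a - n)
    have h2 := t.invariant (c+1) (a - n)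
    rw [show c + 1 + n = c + n + 1 by ring, sub_add_cancel] at h2
    rw [sub_add_cancel] at this
    refine ⟨by omega, this.2 ha.2.1, fun h => ha.2.2 (h2.1 h)⟩

lemma cnt_toTITO (e : ℤ → ℕ) (n : ℕ) (hn : 1 ≤ n) (he : ∀ i, e (i + n) = e i)
    (hs : S e 0 n ≤ n) (c : ℤ) : cnt (toTITO e n he) c = e c := by
  have hmem : ∀ a, a ∈ ends (toTITO e n he) c ↔
      (c - n < a ∧ a ≤ c ∧ Inv e a c ∧ c + 1 - a ≤ S e a c + e c) := by
    intro a
    simp only [ends, Finset.mem_filter, Finset.mem_Ioc, and_assoc]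
    refine and_congr_right fun h1 => and_congr_right fun h2 => ?_
    rw [toTITO_rel e n he h2, toTITO_rel e n he (by omega)]
    refine and_congr_right fun h3 => ?_
    have hS := S_add e h2 (show c ≤ c + 1 by omega)
    rw [S_one] at hS
    rw [hS]
    constructor
    · intro h
      by_contra h4
      apply h
      intro d h5 h6
      rcases eq_or_lt_of_le h6 with rfl | h7
      · omega
      · exact h3 d h5 (by omega)
    · intro h h'
      have := h' (c + 1) (by omega) le_rfl
      omega
  unfold cnt
  conv_rhs => rw [← Finset.card_range (e c)]
  apply Finset.card_bij (fun a _ => (c - a - S e a c).toNat)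
  · intro a ha
    obtain ⟨h1, h2, h3, h4⟩ := (hmem a).1 ha
    rw [Finset.mem_range]
    have : 0 ≤ S e a c := S_nonneg e a c
    have : 0 ≤ c - a - S e a c := by
      rcases eq_or_lt_of_le h2 with rfl | h5
      · simp [S]
      · have := h3 c h5 le_rfl; omega
    omega
  · have main : ∀ a b, a ∈ ends (toTITO e n he) c → b ∈ ends (toTITO e n he) c → a < b →
        (c - a - S e a c).toNat ≠ (c - b - S e b c).toNat := by
      intro a b ha hb hab
      obtain ⟨h1, h2, h3, h4⟩ := (hmem a).1 ha
      obtain ⟨h1', h2', h3', h4'⟩ := (hmem b).1 hb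
      have := h3 b hab h2'
      have := S_add e hab.le h2'
      have : 0 ≤ c - b - S e b c := by
        rcases eq_or_lt_of_le h2' with rfl | h5
        · simp [S]
        · have := h3' c h5 le_rfl; omega
      omega
    intro a ha b hb h
    rcases lt_trichotomy a b with h1 | h1 | h1
    · exact absurd h (main a b ha hb h1)
    · exact h1
    · exact absurd h.symm (main b a hb ha h1)
  · intro j hj
    rw [Finset.mem_range] at hj
    have h0 : (j : ℤ) ≤ c - (c - n + 1) - S e (c - n + 1) c := by
      have h1 := S_period e n he (c - n + 1)
      have h2 := S_add e (show c - n + 1 ≤ c by omega) (show c ≤ c + 1 by omega)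
      rw [S_one] at h2
      rw [show c - n + 1 + n = c + 1 by ring] at h1
      omega
    obtain ⟨a, ⟨ha1, ha2⟩, hmax⟩ := Int.exists_greatest_of_bdd
      (P := fun a => a ≤ c ∧ (j : ℤ) ≤ c - a - S e a c) ⟨c, fun z hz => hz.1⟩
      ⟨c - n + 1, by omega, h0⟩
    have hac : c - n + 1 ≤ a := hmax _ ⟨by omega, h0⟩
    have hlt : ∀ d, a < d → d ≤ c → c - d - S e d c < j := by
      intro d h1 h2
      by_contra h3
      have := hmax d ⟨h2, by omega⟩
      omega
    have heq : c - a - S e a c = j := by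
      rcases eq_or_lt_of_le ha1 with rfl | h5
      · have : S e a a = 0 := by simp [S]
        omega
      · have h6 := hlt (a+1) (by omega) (by omega)
        have h7 := S_add e (show a ≤ a + 1 by omega) (show a + 1 ≤ c by omega)
        rw [S_one] at h7
        omega
    refine ⟨a, (hmem a).2 ⟨by omega, ha1, ?_, by omega⟩, by omega⟩
    intro d h1 h2
    have := hlt d h1 h2
    have := S_add e h1.le h2
    omega

section avoid

variable {n : ℕ} {t : TITO n}

lemma conv (ht : t.Avoids312) {a b c : ℤ} (h1 : a ≤ b) (h2 : b ≤ c) (h : t.rel c a) :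
    t.rel b a := by
  rcases eq_or_lt_of_le h1 with rfl | h1
  · exact t.refl _
  rcases eq_or_lt_of_le h2 with rfl | h2
  · exact h
  rcases t.total b a with h3 | h3
  · exact h3
  · exact absurd ⟨a, b, c, h1, h2, h, h3⟩ ht

lemma shiftk (t : TITO n) (k : ℕ) (a b : ℤ) : t.rel a b ↔ t.rel (a + k * n) (b + k * n) := by
  induction k with
  | zero => simp
  | succ k ih =>
    rw [ih, t.invariant]
    push_cast
    rw [show a + k * n + (n : ℤ) = a + (k + 1) * n by ring,
      show b + k * n + (n : ℤ) = b + (k + 1) * n by ring]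

lemma shiftz (t : TITO n) (k : ℤ) (a b : ℤ) : t.rel a b ↔ t.rel (a + k * n) (b + k * n) := by
  rcases Int.eq_nat_or_neg k with ⟨m, rfl | rfl⟩
  · exact shiftk t m a b
  · rw [shiftk t m (a + -m * n)]
    rw [show a + -m * n + (m : ℤ) * n = a by ring, show b + -m * n + (m : ℤ) * n = b by ring]

lemma up_iter {a : ℤ} (h : t.rel a (a + n)) (k : ℕ) : t.rel a (a + k * n) := by
  induction k with
  | zero => simpa using t.refl a
  | succ k ih =>
    refine t.trans _ _ _ ih ?_
    have := (shiftk t k a (a + n)).1 h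
    push_cast
    rwa [show a + (k + 1 : ℤ) * n = a + n + k * n by ring]

lemma down_iter {a : ℤ} (h : t.rel (a + n) a) (k : ℕ) : t.rel (a + k * n) a := by
  induction k with
  | zero => simpa using t.refl a
  | succ k ih =>
    refine t.trans _ _ _ ?_ ih
    have := (shiftk t k (a + n) a).1 h
    push_cast
    rwa [show a + (k + 1 : ℤ) * n = a + n + k * n by ring]

lemma waning_all (hn : 1 ≤ n) (ht : t.Avoids312) {a b : ℤ} (h : t.rel (a + n) a) (hab : a ≤ b) :
    t.rel b a := by
  refine conv ht hab ?_ (down_iter h (b - a).toNat)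
  rw [Int.toNat_of_nonneg (by omega)]
  nlinarith

lemma mem_ends (hn : 1 ≤ n) (ht : t.Avoids312) (a c : ℤ) :
    a ∈ ends t c ↔ a ≤ c ∧ t.rel c a ∧ ¬ t.rel (c + 1) a := by
  simp only [ends, Finset.mem_filter, Finset.mem_Ioc]
  constructor
  · rintro ⟨⟨_, h⟩, h'⟩; exact ⟨h, h'⟩
  · rintro ⟨h1, h2, h3⟩
    refine ⟨⟨?_, h1⟩, h2, h3⟩
    by_contra h4
    exact h3 (waning_all hn ht (conv ht (by omega) (by omega) h2) (by omega))

lemma exists_end {a c : ℤ} (hac : a ≤ c) (h : ¬ t.rel c a) :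
    ∃ d, a ≤ d ∧ d < c ∧ t.rel d a ∧ ¬ t.rel (d + 1) a := by
  obtain ⟨d, ⟨h1, h2, h3⟩, hm⟩ := Int.exists_least_of_bdd
    (P := fun d => a ≤ d ∧ d ≤ c ∧ ¬ t.rel d a) ⟨a, fun z hz => hz.1⟩ ⟨c, hac, le_rfl, h⟩
  have h4 : a ≠ d := by rintro rfl; exact h3 (t.refl _)
  refine ⟨d - 1, by omega, by omega, ?_, by simpa using h3⟩
  by_contra h5
  have := hm (d - 1) ⟨by omega, by omega, h5⟩
  omega

lemma S_cnt (hn : 1 ≤ n) (ht : t.Avoids312) (x y : ℤ) :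
    S (cnt t) x y = ((Finset.Ico x y).biUnion (ends t)).card := by
  rw [Finset.card_biUnion]
  · simp [S, cnt]
  · have key : ∀ c d, c < d → Disjoint (ends t c) (ends t d) := by
      intro c d h
      rw [Finset.disjoint_left]
      intro a h1 h2
      rw [mem_ends hn ht] at h1 h2
      exact h1.2.2 (conv ht (by omega) (by omega) h2.2.1)
    intro c _ d _ h
    rcases lt_or_gt_of_ne h with h | h
    · exact key c d h
    · exact (key d c h).symm

lemma toTITO_cnt (hn : 1 ≤ n) (ht : t.Avoids312) : toTITO (cnt t) n (cnt_periodic t) = t := by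
  apply TITO_ext
  intro a c hac
  rw [toTITO_rel _ _ _ hac.le]
  constructor
  · intro h
    by_contra h'
    obtain ⟨d, h1, h2, h3, h4⟩ := exists_end hac.le h'
    have h5 := h (d + 1) (by omega) (by omega)
    rw [S_cnt hn ht] at h5
    have h6 : Finset.Ico a (d+1) ⊆ (Finset.Ico a (d+1)).biUnion (ends t) := by
      intro x hx
      rw [Finset.mem_Ico] at hx
      have h7 : ¬ t.rel (d + 1) x := fun h8 =>
        h4 (t.trans _ _ _ h8 (conv ht hx.1 (by omega) h3))
      obtain ⟨f, h8, h9, h10, h11⟩ := exists_end (by omega) h7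
      rw [Finset.mem_biUnion]
      exact ⟨f, by rw [Finset.mem_Ico]; omega, (mem_ends hn ht _ _).2 ⟨h8, h10, h11⟩⟩
    have := Finset.card_le_card h6
    rw [Int.card_Ico] at this
    omega
  · intro h d h1 h2
    have h3 : t.rel d a := conv ht h1.le h2 h
    rw [S_cnt hn ht]
    have h6 : (Finset.Ico a d).biUnion (ends t) ⊆ Finset.Ioo a d := by
      intro x hx
      rw [Finset.mem_biUnion] at hx
      obtain ⟨f, hf, hx⟩ := hx
      rw [Finset.mem_Ico] at hf
      rw [mem_ends hn ht] at hx
      rw [Finset.mem_Ioo]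
      refine ⟨?_, by omega⟩
      by_contra h4
      have h5 := conv ht (show x ≤ a by omega) hf.1 hx.2.1
      exact hx.2.2 (conv ht (by omega) (by omega) (t.trans _ _ _ h3 h5))
    have := Finset.card_le_card h6
    rw [Int.card_Ioo] at this
    omega

lemma exists_good (hn : 1 ≤ n) (ht : t.Avoids312) :
    ∃ x, ∀ a, a < x → t.rel x a → t.rel (a + n) a := by
  by_contra! h
  have key : ∀ k : ℕ, ∃ a, a ≤ 0 - (k + 1 : ℤ) ∧ t.rel 0 a ∧ ¬ t.rel (a + n) a := by
    intro k
    induction k with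
    | zero =>
      obtain ⟨a, h1, h2, h3⟩ := h 0
      exact ⟨a, by push_cast; omega, h2, h3⟩
    | succ k ih =>
      obtain ⟨b, h1, h2, h3⟩ := ih
      obtain ⟨a, h4, h5, h6⟩ := h b
      exact ⟨a, by push_cast; omega, t.trans _ _ _ h2 h5, h6⟩
  obtain ⟨a, h1, h2, h3⟩ := key n
  exact h3 (conv ht (by omega) (by omega) h2)

open Classical in
lemma S_cnt_period (hn : 1 ≤ n) (ht : t.Avoids312) :
    ∃ x : ℤ, S (cnt t) 0 n = n - ((Finset.Ico x (x + n)).filter (fun a => t.rel (a + n) a)).card := by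
  obtain ⟨x, hx⟩ := exists_good hn ht
  refine ⟨x, ?_⟩
  rw [← S_period _ n (cnt_periodic t) x, S_cnt hn ht]
  have hset : (Finset.Ico x (x + n)).biUnion (ends t) =
      (Finset.Ico x (x + n)).filter (fun a => ¬ t.rel (a + n) a) := by
    ext a
    simp only [Finset.mem_biUnion, Finset.mem_filter, Finset.mem_Ico, mem_ends hn ht]
    constructor
    · rintro ⟨c, h1, h2, h3, h4⟩
      have hw : ¬ t.rel (a + n) a := fun h => h4 (waning_all hn ht h (by omega))
      refine ⟨⟨?_, by omega⟩, hw⟩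
      by_contra h5
      exact hw (hx a (by omega) (conv ht (by omega) (by omega) h3))
    · rintro ⟨⟨h1, h2⟩, h3⟩
      have h4 : ¬ t.rel (x + n) a := by
        intro h5
        have h6 := (t.invariant x (a - n)).2 (by simpa using h5)
        have h7 := hx (a - n) (by omega) h6
        have h8 := (t.invariant _ _).1 h7
        simp only [sub_add_cancel] at h8
        exact h3 h8
      obtain ⟨d, h5, h6, h7⟩ := exists_end h2.le h4
      exact ⟨d, by omega, h5, h7⟩
  have h := Finset.card_filter_add_card_filter_not (s := Finset.Ico x (x + n)) (fun a => t.rel (a + n) a)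
  rw [Int.card_Ico] at h
  rw [hset]
  omega

lemma wan_shift (t : TITO n) (k : ℤ) (a : ℤ) :
    t.rel (a + n) a ↔ t.rel (a + k * n + n) (a + k * n) := by
  rw [shiftz t k, show a + n + k * n = a + k * n + n by ring]

lemma rep (hn : 1 ≤ n) (x a : ℤ) : ∃ k : ℤ, x ≤ a + k * n ∧ a + k * n < x + n := by
  refine ⟨- ((a - x) / n), ?_⟩
  have h1 := Int.emod_add_mul_ediv (a - x) n
  have h2 := Int.emod_nonneg (a - x) (show (n : ℤ) ≠ 0 by omega)
  have h3 := Int.emod_lt_of_pos (a - x) (show (0 : ℤ) < n by omega)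
  constructor <;> nlinarith

open Classical in
lemma real_iff (hn : 1 ≤ n) (ht : t.Avoids312) (x : ℤ) :
    t.IsReal ↔ ((Finset.Ico x (x + n)).filter (fun a => t.rel (a + n) a)).card ≠ 1 := by
  have hn0 : (n : ℤ) ≠ 0 := by omega
  constructor
  · intro hr h1
    rw [Finset.card_eq_one] at h1
    obtain ⟨a, ha⟩ := h1
    have hw : ∀ b, x ≤ b → b < x + n → t.rel (b + n) b → b = a := by
      intro b h1 h2 h3
      have : b ∈ ({a} : Finset ℤ) := by
        rw [← ha, Finset.mem_filter, Finset.mem_Ico]; exact ⟨⟨h1, h2⟩, h3⟩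
      simpa using this
    have ha' : t.rel (a + n) a := by
      have : a ∈ ({a} : Finset ℤ) := by simp
      rw [← ha, Finset.mem_filter] at this
      exact this.2
    have hconv : t.OrderConvex {y : ℤ | ∃ k : ℤ, y = a + k * n} := by
      rintro _ ⟨k, rfl⟩ _ ⟨l, rfl⟩ y h1 h2
      by_cases hy : t.rel (y + n) y
      · obtain ⟨m, h3, h4⟩ := rep hn x y
        have := hw _ h3 h4 ((wan_shift t m y).1 hy)
        exact ⟨-m, by rw [← this]; ring⟩
      · exfalso
        have hy' : t.rel y (y + n) := (t.total _ _).resolve_right hy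
        set z := a + k * n with hz
        have hwz : t.rel (z + n) z := (wan_shift t k a).1 ha'
        have h3 := up_iter hy' (z - y).toNat
        have h4 : z ≤ y + ((z - y).toNat : ℤ) * n := by
          rcases le_total z y with h | h
          · have : (0:ℤ) ≤ ((z - y).toNat : ℤ) * n := by positivity
            omega
          · rw [Int.toNat_of_nonneg (by omega)]; nlinarith
        have h5 := t.trans _ _ _ h3 (waning_all hn ht hwz h4)
        have h6 := t.antisymm _ _ h5 h1
        rw [h6] at hy
        exact hy hwz
    have := t.antisymm _ _ (hr a hconv) ha'
    omega
  · intro hc a hconv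
    by_contra hw
    have hw' : t.rel (a + n) a := (t.total _ _).resolve_left hw
    apply hc
    obtain ⟨k, h1, h2⟩ := rep hn x a
    rw [Finset.card_eq_one]
    refine ⟨a + k * n, ?_⟩
    ext b
    simp only [Finset.mem_filter, Finset.mem_Ico, Finset.mem_singleton]
    constructor
    · rintro ⟨⟨h3, h4⟩, h5⟩
      obtain ⟨m, h6, h7⟩ := rep hn a b
      have h8 : t.rel (b + m * n) a := waning_all hn ht hw' h6
      have h9 : t.rel (a + n) (b + m * n) := waning_all hn ht ((wan_shift t m b).1 h5) h7.le
      obtain ⟨l, hl⟩ := hconv (a + n) ⟨1, by ring⟩ a ⟨0, by ring⟩ _ h9 h8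
      have h10 : b - (a + k * n) = (l - m - k) * n := by linarith
      have h11 : l - m - k = 0 := by
        by_contra hne
        rcases lt_or_gt_of_ne hne with h | h
        · have : (l - m - k) * (n : ℤ) ≤ (-1) * n := by
            apply mul_le_mul_of_nonneg_right <;> omega
          omega
        · have : 1 * (n : ℤ) ≤ (l - m - k) * (n : ℤ) := by
            apply mul_le_mul_of_nonneg_right <;> omega
          omega
      rw [h11] at h10
      omega
    · rintro rfl
      exact ⟨⟨h1, h2⟩, (wan_shift t k a).1 hw'⟩

lemma sum_le (hn : 1 ≤ n) (ht : t.Avoids312) : S (cnt t) 0 n ≤ n := by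
  obtain ⟨x, hx⟩ := S_cnt_period hn ht
  omega

lemma real_iff' (hn : 1 ≤ n) (ht : t.Avoids312) : t.IsReal ↔ S (cnt t) 0 n ≠ n - 1 := by
  classical
  obtain ⟨x, hx⟩ := S_cnt_period hn ht
  rw [real_iff hn ht x, hx]
  omega

end avoid

/-- extend periodically -/
def ext {n : ℕ} (hn : 1 ≤ n) (g : Fin n → ℕ) (i : ℤ) : ℕ :=
  g ⟨(i % n).toNat, by
    have := Int.emod_lt_of_pos i (show (0 : ℤ) < n by omega)
    omega⟩

lemma ext_periodic {n : ℕ} (hn : 1 ≤ n) (g : Fin n → ℕ) (i : ℤ) : ext hn g (i + n) = ext hn g i := by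
  unfold ext; congr 2; simp

lemma ext_nat {n : ℕ} (hn : 1 ≤ n) (g : Fin n → ℕ) (i : Fin n) : ext hn g (i : ℕ) = g i := by
  unfold ext; congr 1
  apply Fin.ext
  simp only
  rw [Int.emod_eq_of_lt (by omega) (by have := i.2; omega)]
  simp

lemma S_fin (n : ℕ) (e : ℤ → ℕ) : S e 0 n = ((∑ i : Fin n, e (i : ℕ) : ℕ) : ℤ) := by
  induction n with
  | zero => simp [S]
  | succ k ih =>
    have := S_add e (show (0 : ℤ) ≤ k by omega) (show (k : ℤ) ≤ k + 1 by omega)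
    rw [S_one, ih] at this
    push_cast at this ⊢
    rw [← this, Fin.sum_univ_castSucc]
    simp

lemma ext_of_periodic {n : ℕ} (hn : 1 ≤ n) (e : ℤ → ℕ) (he : ∀ i, e (i + n) = e i) :
    ext hn (fun i : Fin n => e (i : ℕ)) = e := by
  funext i
  unfold ext
  simp only
  rw [Int.toNat_of_nonneg (Int.emod_nonneg i (by omega))]
  have hp : Function.Periodic e (n : ℤ) := he
  have h := hp.int_mul (i / n) (i % n)
  rw [← h]
  congr 1
  have := Int.emod_add_mul_ediv i n
  simp only [Int.cast_id]
  linarith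

lemma S_ext {n : ℕ} (hn : 1 ≤ n) (g : Fin n → ℕ) : S (ext hn g) 0 n = ((∑ i, g i : ℕ) : ℤ) := by
  rw [S_fin]; simp only [ext_nat]

lemma card_eq (n : ℕ) (hn : 1 ≤ n) :
    Nat.card {t : TITO n // t.Avoids312 ∧ t.IsReal} =
      Nat.card {g : Fin n → ℕ // ∑ i, g i ≤ n ∧ ∑ i, g i ≠ n - 1} := by
  symm
  have hc : ∀ g : Fin n → ℕ, ∑ i, g i ≤ n →
      cnt (toTITO (ext hn g) n (ext_periodic hn g)) = ext hn g := by
    intro g hg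
    funext c
    apply cnt_toTITO _ _ hn
    rw [S_ext]; exact_mod_cast hg
  apply Nat.card_eq_of_bijective (fun g => (⟨toTITO (ext hn g.1) n (ext_periodic hn g.1),
    toTITO_avoids _ _ _, by
      rw [real_iff' hn (toTITO_avoids _ _ _), hc _ g.2.1, S_ext]
      have := g.2.2
      omega⟩ : {t : TITO n // t.Avoids312 ∧ t.IsReal}))
  constructor
  · rintro ⟨g, hg⟩ ⟨g', hg'⟩ h
    simp only [Subtype.mk.injEq] at h
    have h1 := hc g hg.1
    rw [h, hc g' hg'.1] at h1
    apply Subtype.ext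
    funext i
    simp only
    rw [← ext_nat hn g, ← ext_nat hn g', h1]
  · rintro ⟨t, ht, hr⟩
    have h1 := sum_le hn ht
    have h2 := (real_iff' hn ht).1 hr
    rw [S_fin] at h1 h2
    refine ⟨⟨fun i : Fin n => cnt t (i : ℕ), by beta_reduce; omega, by beta_reduce; omega⟩, ?_⟩
    apply Subtype.ext
    simp only
    have h3 := ext_of_periodic hn (cnt t) (cnt_periodic t)
    simp only [h3]
    exact toTITO_cnt hn ht

lemma card_tuple (n k : ℕ) : (Finset.Nat.antidiagonalTuple n k).card = Nat.multichoose n k := by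
  have h := Nat.card_congr (Sym.equivNatSumOfFintype (Fin n) k)
  rw [Nat.card_eq_fintype_card, Sym.card_sym_eq_multichoose, Fintype.card_fin] at h
  rw [h, ← Nat.card_eq_finsetCard]
  apply Nat.card_congr
  apply Equiv.subtypeEquivRight
  intro g
  rw [Finset.Nat.mem_antidiagonalTuple]

lemma card_fun (n : ℕ) (hn : 1 ≤ n) :
    Nat.card {g : Fin n → ℕ // ∑ i, g i ≤ n ∧ ∑ i, g i ≠ n - 1} + Nat.choose (2 * n - 2) (n - 1)
      = Nat.choose (2 * n) n := by
  have h1 : Nat.card {g : Fin n → ℕ // ∑ i, g i ≤ n ∧ ∑ i, g i ≠ n - 1} =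
      (((Finset.range (n + 1)).erase (n - 1)).biUnion (Finset.Nat.antidiagonalTuple n)).card := by
    rw [← Nat.card_eq_finsetCard]
    apply Nat.card_congr
    apply Equiv.subtypeEquivRight
    intro g
    simp only [Finset.mem_biUnion, Finset.mem_erase, Finset.mem_range,
      Finset.Nat.mem_antidiagonalTuple]
    constructor
    · rintro ⟨h1, h2⟩; exact ⟨_, ⟨h2, by omega⟩, rfl⟩
    · rintro ⟨a, ⟨h1, h2⟩, h3⟩; omega
  rw [h1, Finset.card_biUnion]
  · simp only [card_tuple]
    have h2 : Nat.choose (2 * n - 2) (n - 1) = Nat.multichoose n (n - 1) := by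
      rw [Nat.multichoose_eq]; congr 1; omega
    rw [h2, Finset.sum_erase_add _ _ (by simp), Nat.sum_range_multichoose]
    congr 1; omega
  · intro a _ b _ hab
    change Disjoint _ _
    rw [Finset.disjoint_left]
    intro g h1 h2
    rw [Finset.Nat.mem_antidiagonalTuple] at h1 h2
    exact hab (h1.symm.trans h2)

lemma arith (n : ℕ) (hn : 1 ≤ n) (N : ℕ)
    (h : N + Nat.choose (2 * n - 2) (n - 1) = Nat.choose (2 * n) n) :
    n * N = (3 * n - 2) * Nat.choose (2 * n - 2) (n - 1) := by
  obtain ⟨m, rfl⟩ : ∃ m, n = m + 1 := ⟨n - 1, by omega⟩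
  have h1 := Nat.succ_mul_centralBinom_succ m
  unfold Nat.centralBinom at h1
  rw [show 2 * (m + 1) - 2 = 2 * m by omega, show m + 1 - 1 = m by omega] at *
  rw [show 3 * (m + 1) - 2 = 3 * m + 1 by omega]
  rw [← h] at h1
  nlinarith

end TITO15

theorem stmt15 (n : ℕ) (hn : 2 ≤ n) :
    n * Nat.card {t : TITO n // t.Avoids312 ∧ t.IsReal} =
      (3 * n - 2) * Nat.choose (2 * n - 2) (n - 1) := by
  have h1 : 1 ≤ n := by omega
  apply TITO15.arith n h1
  rw [TITO15.card_eq n h1]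
  exact TITO15.card_fun n h1
end
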